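/- arXiv:math/0605002 — 2 statements merged into one kernel-verified Lean document; each statement's English description precedes it below -/
import Mathlib

section
/- Let X be a length space, let Y be a nonempty subset of X, and let F : Y → ℝ be a bounded Lipschitz function. Then there exists exactly one absolutely minimal (AM) extension u : X → ℝ of F. -/
open Metric Set

noncomputable section

/-- The length of a continuous path: its total variation. -/
def pathLength {X : Type*} [MetricSpace X] {x y : X} (γ : Path x y) : ENNReal :=
  eVariationOn (fun t => γ t) (Set.univ : Set unitInterval)

/-- A metric space is a length space if the distance between any two points equals the
infimum of the lengths of continuous paths joining them. -/
def IsLengthSpace (X : Type*) [MetricSpace X] : Prop :=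
  ∀ x y : X, edist x y = ⨅ γ : Path x y, pathLength γ

/-- The (possibly infinite) Lipschitz constant of `u` on `S`:
`Lip_S u = sup {|u x - u y| / d(x,y) : x, y ∈ S, x ≠ y}`. -/
def lipOn {X : Type*} [MetricSpace X] (u : X → ℝ) (S : Set X) : ENNReal :=
  ⨆ (x : X) (_ : x ∈ S) (y : X) (_ : y ∈ S) (_ : x ≠ y),
    ENNReal.ofReal (|u x - u y| / dist x y)

/-- `u : X → ℝ` is an absolutely minimal (AM) extension of `F` prescribed on `Y`:
`u` is Lipschitz, `u = F` on `Y`, and `Lip_U u = Lip_{∂U} u` for every open `U ⊆ X \ Y`. -/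
def IsAMExtension {X : Type*} [MetricSpace X] (Y : Set X) (F u : X → ℝ) : Prop :=
  lipOn u Set.univ < ⊤ ∧ Set.EqOn u F Y ∧
    ∀ U : Set X, IsOpen U → U ⊆ Yᶜ → lipOn u U = lipOn u (frontier U)

section AMHelpers

variable {X : Type*} [MetricSpace X]

/-- Real-constant Lipschitz predicate. -/
def RLip (K : ℝ) (u : X → ℝ) : Prop := ∀ x y, u x - u y ≤ K * dist x y

lemma RLip.cont {K : ℝ} {u : X → ℝ} (h : RLip K u) : Continuous u := by
  have : LipschitzWith (Real.toNNReal K) u := by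
    apply LipschitzWith.of_dist_le_mul
    intro x y
    rw [Real.dist_eq, abs_le]
    have h1 := h x y
    have h2 := h y x
    rw [dist_comm y x] at h2
    have h3 : K * dist x y ≤ (Real.toNNReal K : ℝ) * dist x y :=
      mul_le_mul_of_nonneg_right (Real.le_coe_toNNReal K) dist_nonneg
    constructor <;> linarith
  exact this.continuous

lemma RLip.neg {K : ℝ} {u : X → ℝ} (h : RLip K u) : RLip K (fun x => - u x) := by
  intro x y
  have := h y x
  rw [dist_comm] at this
  linarith

lemma lipOn_le_iff {u : X → ℝ} {S : Set X} {b : ℝ} (hb : 0 ≤ b) :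
    lipOn u S ≤ ENNReal.ofReal b ↔ ∀ x ∈ S, ∀ y ∈ S, u x - u y ≤ b * dist x y := by
  unfold lipOn
  simp only [iSup_le_iff]
  constructor
  · intro h x hx y hy
    by_cases hxy : x = y
    · subst hxy; simp
    · have h1 := h x hx y hy hxy
      rw [ENNReal.ofReal_le_ofReal_iff hb, div_le_iff₀ (dist_pos.2 hxy)] at h1
      exact (le_abs_self _).trans h1
  · intro h x hx y hy hxy
    rw [ENNReal.ofReal_le_ofReal_iff hb, div_le_iff₀ (dist_pos.2 hxy), abs_le]
    have h1 := h x hx y hy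
    have h2 := h y hy x hx
    rw [dist_comm y x] at h2
    constructor <;> linarith

lemma exists_path (hX : IsLengthSpace X) (x z : X) {τ : ℝ} (hτ : 0 < τ) :
    ∃ γ : Path x z, ∀ t, dist x (γ t) + dist (γ t) z ≤ dist x z + τ := by
  have h1 : (⨅ γ : Path x z, pathLength γ) < edist x z + ENNReal.ofReal τ := by
    rw [← hX x z]
    exact ENNReal.lt_add_right (edist_ne_top x z) (by simpa using hτ)
  obtain ⟨γ, hγ⟩ := iInf_lt_iff.1 h1
  refine ⟨γ, fun t => ?_⟩
  have h2 : edist x (γ t) + edist (γ t) z ≤ pathLength γ := by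
    have ha : edist (γ 0) (γ t) ≤ eVariationOn (fun t => γ t) (Set.Iic t) :=
      eVariationOn.edist_le _ (by simp) (by simp)
    have hb : edist (γ t) (γ 1) ≤ eVariationOn (fun t => γ t) (Set.Ici t) :=
      eVariationOn.edist_le _ (by simp) (show t ≤ 1 from unitInterval.le_one')
    have hc : eVariationOn (fun t => γ t) (Set.Iic t) + eVariationOn (fun t => γ t) (Set.Ici t)
        ≤ eVariationOn (fun t => γ t) (Set.Iic t ∪ Set.Ici t) :=
      eVariationOn.add_le_union _ (fun a ha b hb => le_trans ha hb)
    have hd := eVariationOn.mono (fun t => γ t) (Set.subset_univ (Set.Iic t ∪ Set.Ici t))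
    simp only [γ.source, γ.target] at ha hb
    exact (add_le_add ha hb).trans (hc.trans hd)
  have h3 := h2.trans hγ.le
  simp only [edist_dist] at h3
  rw [← ENNReal.ofReal_add dist_nonneg dist_nonneg, ← ENNReal.ofReal_add dist_nonneg hτ.le,
    ENNReal.ofReal_le_ofReal_iff (by positivity)] at h3
  exact h3

lemma exit_point (hX : IsLengthSpace X) {U : Set X} {x z : X} (hx : x ∈ U) (hz : z ∉ U)
    {τ : ℝ} (hτ : 0 < τ) :
    ∃ p ∈ frontier U, dist x p + dist p z ≤ dist x z + τ := by
  obtain ⟨γ, hγ⟩ := exists_path hX x z hτ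
  have hc : IsPreconnected (Set.range γ) := isPreconnected_range γ.continuous
  have h0 : x ∈ Set.range γ := ⟨0, γ.source⟩
  have h1 : z ∈ Set.range γ := ⟨1, γ.target⟩
  obtain ⟨p, ⟨t, rfl⟩, hp⟩ : (Set.range γ ∩ frontier U).Nonempty := by
    by_contra hne
    rw [Set.not_nonempty_iff_eq_empty] at hne
    have hdis : ∀ q ∈ Set.range γ, q ∉ frontier U := fun q hq hqf => by
      have : q ∈ Set.range γ ∩ frontier U := ⟨hq, hqf⟩
      rw [hne] at this
      exact this
    obtain ⟨q, hq, hq1, hq2⟩ := hc (interior U) (closure U)ᶜ isOpen_interior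
      isClosed_closure.isOpen_compl (fun q hq => by
        by_cases hqU : q ∈ closure U
        · left
          by_contra hqi
          exact hdis q hq ⟨hqU, hqi⟩
        · exact Or.inr hqU)
      ⟨x, h0, by
        by_contra hqi
        exact hdis x h0 ⟨subset_closure hx, hqi⟩⟩
      ⟨z, h1, fun hzc => hdis z h1 ⟨hzc, fun hzi => hz (interior_subset hzi)⟩⟩
    exact hq2 (subset_closure (interior_subset hq1))
  exact ⟨_, hp, hγ t⟩

lemma between_point (hX : IsLengthSpace X) (x z : X) {s : ℝ} (hs0 : 0 ≤ s) (hs : s ≤ dist x z)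
    {τ : ℝ} (hτ : 0 < τ) : ∃ y, dist x y = s ∧ dist y z ≤ dist x z - s + τ := by
  obtain ⟨γ, hγ⟩ := exists_path hX x z hτ
  have hcont : Continuous (fun t => dist x (γ t)) := continuous_const.dist γ.continuous
  have := intermediate_value_univ (0 : unitInterval) 1 hcont
  obtain ⟨t, ht⟩ := this (show s ∈ Set.Icc _ _ by simpa using ⟨hs0, hs⟩)
  refine ⟨γ t, ht, ?_⟩
  have h1 := hγ t
  have h2 : dist x (γ t) = s := ht
  linarith

lemma length_preconnected (hX : IsLengthSpace X) : PreconnectedSpace X := by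
  refine ⟨isPreconnected_of_forall_pair fun x _ y _ => ?_⟩
  obtain ⟨γ, -⟩ := exists_path hX x y one_pos
  exact ⟨Set.range γ, Set.subset_univ _, ⟨0, γ.source⟩, ⟨1, γ.target⟩,
    isPreconnected_range γ.continuous⟩

/-- A nonempty set closed under steps of length at most `ε` is everything. -/
lemma chain_univ [PreconnectedSpace X] {ε : ℝ} (hε : 0 < ε) {A : Set X} (hne : A.Nonempty)
    (h : ∀ x y, y ∈ A → dist x y ≤ ε → x ∈ A) (x : X) : x ∈ A := by
  have hop : IsOpen A := Metric.isOpen_iff.2 fun y hy =>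
    ⟨ε, hε, fun x hx => h x y hy (le_of_lt hx)⟩
  have hcl : IsClosed A := by
    refine isClosed_of_closure_subset fun x hx => ?_
    obtain ⟨y, hy, hxy⟩ := Metric.mem_closure_iff.1 hx ε hε
    exact h x y hy hxy.le
  have : A = Set.univ := IsClopen.eq_univ ⟨hcl, hop⟩ hne
  rw [this]; trivial

/-- Comparison with cones from above. -/
def CCA (Y : Set X) (u : X → ℝ) : Prop :=
  ∀ U : Set X, IsOpen U → U ⊆ Yᶜ → ∀ z, z ∉ U → ∀ a b : ℝ, 0 ≤ b →
    (∀ x ∈ frontier U, u x ≤ a + b * dist x z) → ∀ x ∈ U, u x ≤ a + b * dist x z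

lemma not_mem_of_frontier {U : Set X} (hU : IsOpen U) {p : X} (hp : p ∈ frontier U) : p ∉ U := by
  rw [hU.frontier_eq] at hp
  exact hp.2

lemma closure_of_frontier {U : Set X} {p : X} (hp : p ∈ frontier U) : p ∈ closure U := hp.1

lemma lip_closure {u : X → ℝ} (hu : Continuous u) {W : Set X} {b : ℝ}
    (h : ∀ x ∈ W, ∀ y ∈ W, u x - u y ≤ b * dist x y) :
    ∀ x ∈ closure W, ∀ y ∈ closure W, u x - u y ≤ b * dist x y := by
  have h1 : ∀ x ∈ W, ∀ y ∈ closure W, u x - u y ≤ b * dist x y := by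
    intro x hx
    have hcl : IsClosed {y | u x - u y ≤ b * dist x y} :=
      isClosed_le (continuous_const.sub hu) (continuous_const.mul (continuous_const.dist continuous_id))
    exact fun y hy => closure_minimal (fun y hy => h x hx y hy) hcl hy
  intro x hx y hy
  have hcl : IsClosed {x | u x - u y ≤ b * dist x y} :=
    isClosed_le (hu.sub continuous_const) (continuous_const.mul (continuous_id.dist continuous_const))
  exact closure_minimal (fun x hx => h1 x hx y hy) hcl hx

lemma CCA_of_AM (hX : IsLengthSpace X) {Y : Set X} {u : X → ℝ} (hu : Continuous u)
    (h : ∀ U : Set X, IsOpen U → U ⊆ Yᶜ → lipOn u U = lipOn u (frontier U)) : CCA Y u := by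
  intro U hU hUY z hz a b hb hfr x hxU
  by_contra hcon
  push Not at hcon
  have hg : Continuous (fun x => a + b * dist x z) := by fun_prop
  set W : Set X := U ∩ {x | a + b * dist x z < u x} with hW
  have hWo : IsOpen W := hU.inter (isOpen_lt hg hu)
  have hxW : x ∈ W := ⟨hxU, hcon⟩
  have hWfr : ∀ p ∈ frontier W, u p = a + b * dist p z := by
    intro p hp
    have hpc := closure_of_frontier hp
    have h1 : a + b * dist p z ≤ u p := by
      have : closure W ⊆ {x | a + b * dist x z ≤ u x} :=
        closure_minimal (fun y hy => show a + b * dist y z ≤ u y from le_of_lt hy.2)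
          (isClosed_le hg hu)
      exact this hpc
    refine le_antisymm ?_ h1
    by_cases hpU : p ∈ U
    · by_contra hlt
      push Not at hlt
      exact not_mem_of_frontier hWo hp ⟨hpU, hlt⟩
    · apply hfr
      rw [hU.frontier_eq]
      exact ⟨closure_mono (fun y hy => hy.1) hpc, hpU⟩
  have hlip : lipOn u (frontier W) ≤ ENNReal.ofReal b := by
    rw [lipOn_le_iff hb]
    intro p hp q hq
    rw [hWfr p hp, hWfr q hq]
    have := dist_triangle p q z
    nlinarith
  rw [← h W hWo (fun y hy => hUY hy.1), lipOn_le_iff hb] at hlip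
  have hlip' := lip_closure hu hlip
  set κ := u x - (a + b * dist x z) with hκ
  have hκ0 : 0 < κ := by linarith
  obtain ⟨p, hp, hpd⟩ := exit_point hX hxW (fun hzW => hz hzW.1)
    (show 0 < κ / (2 * (b + 1)) by positivity)
  have h1 := hlip' x (subset_closure hxW) p (closure_of_frontier hp)
  rw [hWfr p hp] at h1
  have h2 : b * (κ / (2 * (b + 1))) < κ := by
    have : b * (κ / (2 * (b + 1))) = κ * (b / (2 * (b + 1))) := by ring
    rw [this]
    have h3 : b / (2 * (b + 1)) < 1 := by
      rw [div_lt_one (by positivity)]; linarith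
    nlinarith
  have h4 := mul_le_mul_of_nonneg_left hpd hb
  nlinarith

lemma AM_of_CCA {Y : Set X} {u : X → ℝ} {K : ℝ} (hK : 0 ≤ K) (hu : RLip K u)
    (h1 : CCA Y u) (h2 : CCA Y (fun x => - u x)) (U : Set X) (hU : IsOpen U) (hUY : U ⊆ Yᶜ) :
    lipOn u U = lipOn u (frontier U) := by
  have hfin : lipOn u (frontier U) ≤ ENNReal.ofReal K := by
    rw [lipOn_le_iff hK]
    exact fun x _ y _ => hu x y
  have hfin2 : lipOn u U ≤ ENNReal.ofReal K := by
    rw [lipOn_le_iff hK]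
    exact fun x _ y _ => hu x y
  apply le_antisymm
  · have htop : lipOn u (frontier U) ≠ ⊤ := ne_top_of_le_ne_top ENNReal.ofReal_ne_top hfin
    set L := (lipOn u (frontier U)).toReal with hL
    have hL0 : 0 ≤ L := ENNReal.toReal_nonneg
    have hLe : lipOn u (frontier U) = ENNReal.ofReal L := (ENNReal.ofReal_toReal htop).symm
    have hfl := (lipOn_le_iff hL0).1 hLe.le
    rw [hLe, lipOn_le_iff hL0]
    have step : ∀ x ∈ U, ∀ z ∈ frontier U, u z - u x ≤ L * dist x z := by
      intro x hx z hz
      have := h2 U hU hUY z (not_mem_of_frontier hU hz) (- u z) L hL0 (by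
        intro p hp
        have := hfl z hz p hp
        rw [dist_comm] at this
        linarith) x hx
      linarith
    intro x hx y hy
    by_cases hxy : x = y
    · subst hxy; simp
    have hUo : IsOpen (U \ {y}) := hU.sdiff isClosed_singleton
    have := h1 (U \ {y}) hUo (fun p hp => hUY hp.1) y (by simp) (u y) L hL0 (by
      intro p hp
      by_cases hpy : p = y
      · subst hpy; simp
      have hpU : p ∉ U := fun hpU => not_mem_of_frontier hUo hp ⟨hpU, hpy⟩
      have hpf : p ∈ frontier U := by
        rw [hU.frontier_eq]
        exact ⟨closure_mono (fun q hq => hq.1) (closure_of_frontier hp), hpU⟩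
      have := step y hy p hpf
      rw [dist_comm] at this
      linarith) x ⟨hx, hxy⟩
    linarith
  · have htop : lipOn u U ≠ ⊤ := ne_top_of_le_ne_top ENNReal.ofReal_ne_top hfin2
    have hLe : lipOn u U = ENNReal.ofReal (lipOn u U).toReal := (ENNReal.ofReal_toReal htop).symm
    have hfl := (lipOn_le_iff ENNReal.toReal_nonneg).1 hLe.le
    rw [hLe, lipOn_le_iff ENNReal.toReal_nonneg]
    intro x hx y hy
    exact lip_closure hu.cont hfl x (closure_of_frontier hx) y (closure_of_frontier hy)

/-- Negative cones lie below positive cones inside `U` if they do so on the boundary. -/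
lemma negcone (hX : IsLengthSpace X) {U : Set X} {z z' : X} (hz : z ∉ U)
    (hz' : z' ∉ U) {a b a' b' : ℝ} (hb : 0 ≤ b) (hb' : 0 ≤ b')
    (h : ∀ x ∈ frontier U, a - b * dist x z ≤ a' + b' * dist x z') :
    ∀ x ∈ U, a - b * dist x z ≤ a' + b' * dist x z' := by
  intro x hx
  apply le_of_forall_pos_le_add
  intro η hη
  have hs : 0 < b + b' + 1 := by positivity
  have hτ : 0 < η / (b + b' + 1) := by positivity
  have hτ' : η / (b + b' + 1) * (b + b' + 1) = η := by field_simp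
  set τ := η / (b + b' + 1)
  rcases le_total b' b with hbb | hbb
  · obtain ⟨p, hp, hpd⟩ := exit_point hX hx hz hτ
    have h1 := h p hp
    have h2 := dist_triangle p x z'
    rw [dist_comm p x] at h2
    have h3 := mul_le_mul_of_nonneg_left hpd hb
    have h4 := mul_le_mul_of_nonneg_left h2 hb'
    have h5 := mul_le_mul_of_nonneg_right hbb (dist_nonneg (x := x) (y := p))
    nlinarith [mul_nonneg hb' hτ.le]
  · obtain ⟨p, hp, hpd⟩ := exit_point hX hx hz' hτ
    have h1 := h p hp
    have h2 := dist_triangle p x z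
    rw [dist_comm p x] at h2
    have h3 := mul_le_mul_of_nonneg_left hpd hb'
    have h4 := mul_le_mul_of_nonneg_left h2 hb
    have h5 := mul_le_mul_of_nonneg_right hbb (dist_nonneg (x := x) (y := p))
    nlinarith [mul_nonneg hb hτ.le]

/-- The Perron class. -/
def Perron (K : ℝ) (Y : Set X) (F : X → ℝ) : Set (X → ℝ) :=
  {w | RLip K w ∧ (∀ y ∈ Y, w y ≤ F y) ∧ CCA Y w}

lemma perron_bump (hX : IsLengthSpace X) {K : ℝ} (hK : 0 ≤ K) {Y : Set X} {F u : X → ℝ}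
    (hu : u ∈ Perron K Y F) {U : Set X} (hU : IsOpen U) (hUY : U ⊆ Yᶜ) {z : X} (hz : z ∉ U)
    {a b : ℝ} (hb : 0 ≤ b) (hbK : b ≤ K)
    (hfr : ∀ x ∈ frontier U, a - b * dist x z ≤ u x) :
    ∃ w ∈ Perron K Y F, ∀ x ∈ U, a - b * dist x z ≤ w x := by
  classical
  obtain ⟨hlip, hF, hcca⟩ := hu
  set m : X → ℝ := fun x => max (u x) (a - b * dist x z) with hm
  have hmlip : RLip K m := by
    intro x y
    have h1 := hlip x y
    have h2 : b * dist y z ≤ b * dist x z + K * dist x y := by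
      have := dist_triangle y x z
      rw [dist_comm y x] at this
      have h3 := mul_le_mul_of_nonneg_left this hb
      have h4 := mul_le_mul_of_nonneg_right hbK (dist_nonneg (x := x) (y := y))
      linarith
    have h2' : b * dist y z - b * dist x z ≤ K * dist x y := by linarith
    have h5 : m x ≤ m y + K * dist x y := by
      apply max_le
      · have := le_max_left (u y) (a - b * dist y z)
        simp only [hm]; linarith
      · have := le_max_right (u y) (a - b * dist y z)
        simp only [hm]; linarith
    linarith
  set w : X → ℝ := fun x => if x ∈ U then m x else u x with hw
  have hwU : ∀ x ∈ U, w x = m x := fun x hx => by simp [hw, hx]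
  have hwU' : ∀ x, x ∉ U → w x = u x := fun x hx => by simp [hw, hx]
  have huw : ∀ x, u x ≤ w x := by
    intro x
    by_cases hx : x ∈ U
    · rw [hwU x hx]; exact le_max_left _ _
    · rw [hwU' x hx]
  have hmf : ∀ p ∈ frontier U, m p = u p := fun p hp => max_eq_left (hfr p hp)
  refine ⟨w, ⟨?_, ?_, ?_⟩, fun x hx => by rw [hwU x hx]; exact le_max_right _ _⟩
  · intro x y
    by_cases hx : x ∈ U <;> by_cases hy : y ∈ U
    · rw [hwU x hx, hwU y hy]; exact hmlip x y
    · rw [hwU x hx, hwU' y hy]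
      apply le_of_forall_pos_le_add
      intro η hη
      obtain ⟨p, hp, hpd⟩ := exit_point hX hx hy (show 0 < η / (K + 1) by positivity)
      have h1 := hmlip x p
      have h2 := hlip p y
      rw [hmf p hp] at h1
      have h3 := mul_le_mul_of_nonneg_left hpd hK
      have h4 : η / (K + 1) * (K + 1) = η := by field_simp
      have h5 : 0 < η / (K + 1) := by positivity
      nlinarith
    · rw [hwU' x hx, hwU y hy]
      have := hlip x y
      have h2 : u y ≤ m y := le_max_left _ _
      linarith
    · rw [hwU' x hx, hwU' y hy]; exact hlip x y
  · intro y hy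
    rw [hwU' y (fun h => hUY h hy)]
    exact hF y hy
  · intro V hV hVY z' hz' a' b' hb' hVf
    have huV := hcca V hV hVY z' hz' a' b' hb' (fun x hx => (huw x).trans (hVf x hx))
    intro x hx
    by_cases hxU : x ∈ U
    · rw [hwU x hxU]
      refine max_le (huV x hx) ?_
      refine negcone hX (U := V ∩ U) (fun h => hz h.2) (fun h => hz' h.1) hb hb' ?_ x ⟨hx, hxU⟩
      intro p hp
      have hpc := closure_of_frontier hp
      have hpV : p ∈ closure V := closure_mono (fun q hq => hq.1) hpc
      have hpU : p ∈ closure U := closure_mono (fun q hq => hq.2) hpc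
      have hpn := not_mem_of_frontier (hV.inter hU) hp
      by_cases hpV' : p ∈ V
      · have hpU' : p ∉ U := fun h => hpn ⟨hpV', h⟩
        have : p ∈ frontier U := by rw [hU.frontier_eq]; exact ⟨hpU, hpU'⟩
        exact (hfr p this).trans (huV p hpV')
      · have hpf : p ∈ frontier V := by rw [hV.frontier_eq]; exact ⟨hpV, hpV'⟩
        refine le_trans ?_ (hVf p hpf)
        by_cases hpU' : p ∈ U
        · rw [hwU p hpU']; exact le_max_right _ _
        · rw [hwU' p hpU']
          apply hfr
          rw [hU.frontier_eq]; exact ⟨hpU, hpU'⟩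
    · rw [hwU' x hxU]; exact huV x hx

lemma exists_CC (hX : IsLengthSpace X) {K : ℝ} (hK : 0 ≤ K) {Y : Set X} (hY : Y.Nonempty)
    {F : X → ℝ} (hF : ∀ x ∈ Y, ∀ y ∈ Y, F x - F y ≤ K * dist x y) :
    ∃ u : X → ℝ, RLip K u ∧ (∀ y ∈ Y, u y = F y) ∧ CCA Y u ∧ CCA Y (fun x => - u x) := by
  obtain ⟨y0, hy0⟩ := hY
  have hcone : ∀ y ∈ Y, (fun x => F y - K * dist x y) ∈ Perron K Y F := by
    intro y hy
    refine ⟨?_, ?_, ?_⟩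
    · intro p q
      have := dist_triangle q p y
      rw [dist_comm q p] at this
      have h3 := mul_le_mul_of_nonneg_left this hK
      simp only
      linarith
    · intro q hq
      have := hF y hy q hq
      rw [dist_comm] at this
      simp only
      linarith
    · intro U hU hUY z hz a b hb hfr
      exact negcone hX (fun h => hUY h hy) hz hK hb hfr
  have hbdd : ∀ x, BddAbove ((fun w : X → ℝ => w x) '' Perron K Y F) := by
    intro x
    refine ⟨F y0 + K * dist x y0, ?_⟩
    rintro _ ⟨w, hw, rfl⟩
    have h1 := hw.1 x y0
    have h2 := hw.2.1 y0 hy0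
    simp only
    linarith
  set u : X → ℝ := fun x => sSup ((fun w : X → ℝ => w x) '' Perron K Y F) with hu
  have hle : ∀ w ∈ Perron K Y F, ∀ x, w x ≤ u x := fun w hw x =>
    le_csSup (hbdd x) ⟨w, hw, rfl⟩
  have hlub : ∀ x c, (∀ w ∈ Perron K Y F, w x ≤ c) → u x ≤ c := by
    intro x c h
    have hne : (Perron K Y F).Nonempty := ⟨_, hcone y0 hy0⟩
    apply csSup_le (hne.image _)
    rintro _ ⟨w, hw, rfl⟩
    exact h w hw
  have hmem : u ∈ Perron K Y F := by
    refine ⟨?_, ?_, ?_⟩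
    · intro x y
      have : u x ≤ u y + K * dist x y := hlub x _ fun w hw => by
        have h1 := hw.1 x y
        have h2 := hle w hw y
        linarith
      linarith
    · exact fun y hy => hlub y _ fun w hw => hw.2.1 y hy
    · intro U hU hUY z hz a b hb hfr x hx
      exact hlub x _ fun w hw => hw.2.2 U hU hUY z hz a b hb
        (fun p hp => (hle w hw p).trans (hfr p hp)) x hx
  refine ⟨u, hmem.1, ?_, hmem.2.2, ?_⟩
  · intro y hy
    refine le_antisymm (hmem.2.1 y hy) ?_
    have := hle _ (hcone y hy) y
    simpa using this
  · intro U hU hUY z hz a b hb hfr x hx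
    have hfr' : ∀ p ∈ frontier U, -a - b * dist p z ≤ u p := fun p hp => by
      have := hfr p hp
      linarith
    rcases le_total b K with hbK | hbK
    · obtain ⟨w, hw, hwU⟩ := perron_bump hX hK hmem hU hUY hz hb hbK hfr'
      have h1 := hwU x hx
      have h2 := hle w hw x
      linarith
    · apply le_of_forall_pos_le_add
      intro η hη
      obtain ⟨p, hp, hpd⟩ := exit_point hX hx hz (show 0 < η / (b + 1) by positivity)
      have h1 := hmem.1 p x
      rw [dist_comm] at h1
      have h2 := hfr' p hp
      have h3 := mul_le_mul_of_nonneg_left hpd hb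
      have h4 : η / (b + 1) * (b + 1) = η := by field_simp
      have h5 : 0 < η / (b + 1) := by positivity
      have h6 := mul_le_mul_of_nonneg_right hbK (dist_nonneg (x := x) (y := p))
      nlinarith

/-! ### Discrete comparison -/

/-- Discrete subsolution property at `x`. -/
def DSub (ε : ℝ) (u : X → ℝ) (x : X) : Prop :=
  ∃ D : ℝ, (∀ y, dist x y ≤ ε → u y ≤ u x + D ∧ u x - D ≤ u y) ∧
    ∀ η > 0, ∃ y, dist x y ≤ ε ∧ u x + D - η ≤ u y

lemma disc_strict {ε : ℝ} {S : Set X} {w v : X → ℝ} {M β δ : ℝ} (hδ : 0 < δ)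
    (hw : ∀ x, w x ≤ M) (hv : ∀ x, -M ≤ v x) (hS : ∀ x ∈ S, w x - v x ≤ β)
    (hsub : ∀ x, x ∉ S → ∃ D, δ ≤ D ∧ (∀ y, dist x y ≤ ε → w x - D ≤ w y) ∧
      ∀ η > 0, ∃ y, dist x y ≤ ε ∧ w x + D - η ≤ w y)
    (hsup : ∀ x, x ∉ S → DSub ε (fun x => - v x) x) (x0 : X) : w x0 - v x0 ≤ β := by
  by_contra hcon
  push Not at hcon
  have hbdd : BddAbove (Set.range fun x => w x - v x) := by
    refine ⟨M + M, ?_⟩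
    rintro _ ⟨x, rfl⟩
    have := hw x
    have := hv x
    simp only
    linarith
  set m := sSup (Set.range fun x => w x - v x) with hm
  have hle : ∀ x, w x - v x ≤ m := fun x => le_csSup hbdd ⟨x, rfl⟩
  have hmβ : β < m := hcon.trans_le (hle x0)
  have key : ∀ n : ℕ, ∀ η > 0, ∃ x, m - η < w x - v x ∧ (β - M) + n * (δ / 2) ≤ w x := by
    intro n
    induction n with
    | zero =>
      intro η hη
      have h1 : m - min η (m - β) < m := by
        have : 0 < min η (m - β) := lt_min hη (by linarith)
        linarith
      obtain ⟨_, ⟨x, rfl⟩, hx⟩ := exists_lt_of_lt_csSup (Set.range_nonempty_iff_nonempty.2 ⟨x0⟩) h1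
      refine ⟨x, ?_, ?_⟩
      · have := min_le_left η (m - β)
        simp only at hx
        linarith
      · have := min_le_right η (m - β)
        have := hv x
        simp only at hx
        push_cast
        linarith
    | succ n ih =>
      intro η hη
      obtain ⟨x, hx1, hx2⟩ := ih (min (η / 4) (m - β)) (lt_min (by linarith) (by linarith))
      have h1 := min_le_left (η / 4) (m - β)
      have h2 := min_le_right (η / 4) (m - β)
      have hxS : x ∉ S := fun h => by
        have := hS x h
        linarith
      obtain ⟨D, hD, hDl, hDu⟩ := hsub x hxS
      obtain ⟨E, hE, hEu⟩ := hsup x hxS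
      obtain ⟨y, hy, hyE⟩ := hEu (η / 4) (by linarith)
      have h3 := hDl y hy
      have h4 := hle y
      obtain ⟨y', hy', hyD⟩ := hDu (min (η / 4) (δ / 2)) (lt_min (by linarith) (by linarith))
      have h5 := min_le_left (η / 4) (δ / 2)
      have h6 := min_le_right (η / 4) (δ / 2)
      have h7 := (hE y' hy').2
      refine ⟨y', ?_, ?_⟩
      · linarith
      · push_cast
        linarith
  obtain ⟨n, hn⟩ := exists_nat_gt ((M - (β - M)) / (δ / 2))
  rw [div_lt_iff₀ (by linarith)] at hn
  obtain ⟨x, -, hx⟩ := key n 1 one_pos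
  have := hw x
  linarith

/-- Values reachable by chains from `A` losing `δ` at each step. -/
inductive Reach (ε δ : ℝ) (A : Set X) (u : X → ℝ) : X → ℝ → Prop
  | base (x : X) (hx : x ∈ A) : Reach ε δ A u x (u x)
  | step (x y : X) (t : ℝ) (hy : Reach ε δ A u y t) (hd : dist x y ≤ ε) (hx : x ∉ A) :
      Reach ε δ A u x (t - δ)

lemma disc_patch [PreconnectedSpace X] {ε : ℝ} (hε : 0 < ε) {S : Set X} (hSne : S.Nonempty)
    {u v : X → ℝ} {M β : ℝ} (hu : ∀ x, u x ≤ M) (hv : ∀ x, -M ≤ v x)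
    (hS : ∀ x ∈ S, u x - v x ≤ β) (hsub : ∀ x, x ∉ S → DSub ε u x)
    (hsup : ∀ x, x ∉ S → DSub ε (fun x => - v x) x) (x0 y0 : X) (hd0 : dist x0 y0 ≤ ε)
    (h0 : u x0 < u y0) : u x0 - v x0 ≤ β := by
  by_cases hx0S : x0 ∈ S
  · exact hS x0 hx0S
  set δ := (u y0 - u x0) / 2 with hδ
  have hδ0 : 0 < δ := by linarith
  set V : Set X := {x | x ∉ S ∧ ∃ y, dist x y ≤ ε ∧ u x + δ < u y} with hV
  set A : Set X := V ∪ S with hA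
  have hx0A : x0 ∈ A := Or.inl ⟨hx0S, y0, hd0, by linarith⟩
  have hnA : ∀ x, x ∉ A → x ∉ S ∧ ∀ y, dist x y ≤ ε → u y ≤ u x + δ := by
    intro x hx
    have hxS : x ∉ S := fun h => hx (Or.inr h)
    refine ⟨hxS, fun y hy => ?_⟩
    by_contra hlt
    push Not at hlt
    exact hx (Or.inl ⟨hxS, y, hy, hlt⟩)
  have hnA' : ∀ x, x ∉ A → ∀ y, dist x y ≤ ε → u x - δ ≤ u y := by
    intro x hx y hy
    obtain ⟨hxS, hxu⟩ := hnA x hx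
    obtain ⟨D, hD, hDu⟩ := hsub x hxS
    have hDδ : D ≤ δ := by
      apply le_of_forall_pos_le_add
      intro η hη
      obtain ⟨y', hy', h⟩ := hDu η hη
      have := hxu y' hy'
      linarith
    have := (hD y hy).2
    linarith
  have hRle : ∀ x t, Reach ε δ A u x t → t ≤ u x := by
    intro x t h
    induction h with
    | base x hx => exact le_rfl
    | step x y t hy hd hx ih =>
      have := (hnA x hx).2 y hd
      linarith
  have hRA : ∀ x t, x ∈ A → Reach ε δ A u x t → t = u x := by
    intro x t hx h
    cases h with
    | base => rfl
    | step _ y t hy hd hx' => exact absurd hx hx'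
  have hRne : ∀ x, ∃ t, Reach ε δ A u x t := by
    intro x
    refine chain_univ (A := {x | ∃ t, Reach ε δ A u x t}) hε ?_ ?_ x
    · exact ⟨x0, _, Reach.base x0 hx0A⟩
    · rintro x y ⟨t, ht⟩ hd
      by_cases hx : x ∈ A
      · exact ⟨_, Reach.base x hx⟩
      · exact ⟨_, Reach.step x y t ht hd hx⟩
  set w : X → ℝ := fun x => sSup {t | Reach ε δ A u x t} with hw
  have hbdd : ∀ x, BddAbove {t | Reach ε δ A u x t} := fun x => ⟨u x, fun t ht => hRle x t ht⟩
  have hle : ∀ x t, Reach ε δ A u x t → t ≤ w x := fun x t ht => le_csSup (hbdd x) ht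
  have hwu : ∀ x, w x ≤ u x := fun x => csSup_le (hRne x) fun t ht => hRle x t ht
  have hwA : ∀ x ∈ A, w x = u x := fun x hx =>
    le_antisymm (hwu x) (hle x _ (Reach.base x hx))
  have hstep : ∀ x, x ∉ A → ∀ y, dist x y ≤ ε → w y - δ ≤ w x := by
    intro x hx y hy
    have : w y ≤ w x + δ := csSup_le (hRne y) fun t ht => by
      have := hle x _ (Reach.step x y t ht hy hx)
      linarith
    linarith
  have main := disc_strict (ε := ε) (S := S) (w := w) (v := v) (M := M) (β := β) hδ0
    (fun x => (hwu x).trans (hu x)) hv (fun x hx => by have := hS x hx; have := hwu x; linarith)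
    (by
      intro x hxS
      by_cases hxA : x ∈ A
      · have hxV : x ∈ V := hxA.resolve_right hxS
        obtain ⟨-, y1, hy1, hy1u⟩ := hxV
        obtain ⟨D, hD, hDu⟩ := hsub x hxS
        have hDδ : δ < D := by
          have := (hD y1 hy1).1
          linarith
        refine ⟨D, hDδ.le, ?_, ?_⟩
        · intro y hy
          by_cases hyA : y ∈ A
          · rw [hwA x hxA, hwA y hyA]
            exact (hD y hy).2
          · have := hstep y hyA x (by rwa [dist_comm])
            linarith
        · intro η hη
          obtain ⟨y, hy, hyu⟩ := hDu (min η ((D - δ) / 2)) (lt_min hη (by linarith))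
          have h1 := min_le_left η ((D - δ) / 2)
          have h2 := min_le_right η ((D - δ) / 2)
          have hyA : y ∈ A := by
            by_contra hyA
            have := hnA' y hyA x (by rwa [dist_comm])
            linarith
          refine ⟨y, hy, ?_⟩
          rw [hwA x hxA, hwA y hyA]
          linarith
      · refine ⟨δ, le_rfl, ?_, ?_⟩
        · intro y hy
          by_cases hyA : y ∈ A
          · rw [hwA y hyA]
            have := hnA' x hxA y hy
            have := hwu x
            linarith
          · have := hstep y hyA x (by rwa [dist_comm])
            linarith
        · intro η hη
          obtain ⟨t, ht, htη⟩ := exists_lt_of_lt_csSup (hRne x)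
            (show w x - η < sSup {t | Reach ε δ A u x t} by
              have : w x = sSup {t | Reach ε δ A u x t} := rfl
              linarith)
          have ht' : Reach ε δ A u x t := ht
          cases ht' with
          | base _ hx => exact absurd hx hxA
          | step _ y t hy hd hx =>
            refine ⟨y, hd, ?_⟩
            have := hle y t hy
            linarith) hsup x0
  rwa [hwA x0 hx0A] at main

lemma disc_main [PreconnectedSpace X] {ε : ℝ} (hε : 0 < ε) {S : Set X} (hSne : S.Nonempty)
    {u v : X → ℝ} {M β : ℝ} (hu : ∀ x, |u x| ≤ M) (hv : ∀ x, |v x| ≤ M)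
    (hS : ∀ x ∈ S, u x - v x ≤ β) (hsub : ∀ x, x ∉ S → DSub ε u x)
    (hsup : ∀ x, x ∉ S → DSub ε (fun x => - v x) x) (x : X) : u x - v x ≤ β := by
  refine chain_univ (A := {x | u x - v x ≤ β}) hε ⟨hSne.some, hS _ hSne.some_mem⟩ ?_ x
  intro x y hy hd
  show u x - v x ≤ β
  by_cases hxS : x ∈ S
  · exact hS x hxS
  by_cases h1 : ∃ y, dist x y ≤ ε ∧ u x < u y
  · obtain ⟨y, hd, hlt⟩ := h1
    exact disc_patch hε hSne (fun x => (abs_le.1 (hu x)).2) (fun x => (abs_le.1 (hv x)).1)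
      hS hsub hsup x y hd hlt
  by_cases h2 : ∃ y, dist x y ≤ ε ∧ - v x < - v y
  · obtain ⟨y, hd, hlt⟩ := h2
    have := disc_patch (u := fun x => - v x) (v := fun x => - u x) (M := M) (β := β) hε hSne
      (fun x => by have := (abs_le.1 (hv x)).1; linarith)
      (fun x => by have := (abs_le.1 (hu x)).2; linarith)
      (fun x hx => by have := hS x hx; linarith) hsup
      (by simpa using hsub) x y hd hlt
    linarith
  push Not at h1 h2
  have aux : ∀ f : X → ℝ, DSub ε f x → (∀ y, dist x y ≤ ε → f y ≤ f x) → f x ≤ f y := by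
    rintro f ⟨D, hD, hDu⟩ hf
    apply le_of_forall_pos_le_add
    intro η hη
    obtain ⟨y', hy', h⟩ := hDu η hη
    have h3 := hf y' hy'
    have h4 := (hD y hd).2
    linarith
  have h3 := aux u (hsub x hxS) h1
  have h4 := aux _ (hsup x hxS) h2
  have h5 : u y - v y ≤ β := hy
  linarith

/-! ### Discretization -/

/-- Supremum of `u` over closed balls. -/
def supBall (ε : ℝ) (u : X → ℝ) (x : X) : ℝ := sSup (u '' closedBall x ε)

lemma le_supBall {ε M : ℝ} {u : X → ℝ} (hu : ∀ x, u x ≤ M) {x y : X} (h : dist y x ≤ ε) :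
    u y ≤ supBall ε u x :=
  le_csSup ⟨M, by rintro _ ⟨p, _, rfl⟩; exact hu p⟩ ⟨y, h, rfl⟩

lemma supBall_le {ε c : ℝ} (hε : 0 ≤ ε) {u : X → ℝ} {x : X} (h : ∀ y, dist y x ≤ ε → u y ≤ c) :
    supBall ε u x ≤ c :=
  csSup_le ⟨u x, x, mem_closedBall_self hε, rfl⟩ (by rintro _ ⟨p, hp, rfl⟩; exact h p hp)

lemma exists_supBall {ε η : ℝ} (hε : 0 ≤ ε) (hη : 0 < η) (u : X → ℝ) (x : X) :
    ∃ y, dist y x ≤ ε ∧ supBall ε u x - η < u y := by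
  obtain ⟨_, ⟨y, hy, rfl⟩, h⟩ := exists_lt_of_lt_csSup (s := u '' closedBall x ε)
    ⟨u x, x, mem_closedBall_self hε, rfl⟩
    (show supBall ε u x - η < sSup (u '' closedBall x ε) by unfold supBall; linarith)
  exact ⟨y, hy, h⟩

lemma dsub_supBall (hX : IsLengthSpace X) {Y : Set X} {u : X → ℝ} {K M ε : ℝ} (hK : 0 ≤ K)
    (hlip : RLip K u) (hM : ∀ x, u x ≤ M) (hcc : CCA Y u) (hε : 0 < ε) {x : X}
    (hx : ∀ y ∈ Y, 2 * ε ≤ dist x y) : DSub ε (supBall ε u) x := by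
  set M1 := supBall ε u x with hM1
  set M2 := supBall (2 * ε) u x with hM2
  have hxM2 : u x ≤ M2 := le_supBall hM (by simp; linarith)
  have hcone : ∀ p, dist p x ≤ ε → u p ≤ (u x + M2) / 2 := by
    intro p hp
    by_cases hpx : p = x
    · subst hpx; linarith
    have hUo : IsOpen (ball x (2 * ε) \ {x}) := isOpen_ball.sdiff isClosed_singleton
    have hb : 0 ≤ (M2 - u x) / (2 * ε) := div_nonneg (by linarith) (by linarith)
    have := hcc (ball x (2 * ε) \ {x}) hUo (by
      intro q hq hqY
      have h1 := hx q hqY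
      have h2 : dist q x < 2 * ε := hq.1
      rw [dist_comm] at h1
      linarith) x (by simp) (u x) ((M2 - u x) / (2 * ε)) hb (by
      intro q hq
      by_cases hqx : q = x
      · subst hqx; simp
      have h1 : dist q x ≤ 2 * ε := closure_ball_subset_closedBall
        (closure_mono (fun r hr => hr.1) (closure_of_frontier hq))
      have h2 : 2 * ε ≤ dist q x := by
        by_contra hlt
        push Not at hlt
        exact not_mem_of_frontier hUo hq ⟨hlt, hqx⟩
      have h3 : dist q x = 2 * ε := le_antisymm h1 h2
      rw [h3, div_mul_cancel₀ _ (by positivity)]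
      have := le_supBall hM h1
      linarith) p ⟨by simp only [mem_ball]; linarith, hpx⟩
    have h5 := mul_le_mul_of_nonneg_left hp hb
    have h6 : (M2 - u x) / (2 * ε) * ε = (M2 - u x) / 2 := by field_simp
    linarith
  have hM1le : M1 ≤ (u x + M2) / 2 := supBall_le hε.le hcone
  refine ⟨M2 - M1, ?_, ?_⟩
  · intro y hy
    constructor
    · have : supBall ε u y ≤ M2 := supBall_le hε.le fun p hp => by
        apply le_supBall hM
        have := dist_triangle p y x
        rw [dist_comm y x] at this
        linarith
      linarith
    · have : u x ≤ supBall ε u y := le_supBall hM hy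
      linarith
  · intro η hη
    obtain ⟨z, hz, hzu⟩ := exists_supBall (show 0 ≤ 2 * ε by linarith) (half_pos hη) u x
    rw [dist_comm] at hz
    suffices h : ∃ y, dist x y ≤ ε ∧ u z - η / 2 ≤ supBall ε u y by
      obtain ⟨y, hy, h⟩ := h
      exact ⟨y, hy, by linarith⟩
    by_cases hzε : dist x z ≤ ε
    · exact ⟨z, hzε, by
        have := le_supBall (ε := ε) hM (show dist z z ≤ ε by simp; linarith)
        linarith⟩
    push Not at hzε
    have hτ : 0 < η / (4 * (K + 1)) := by positivity
    have hτ' : η / (4 * (K + 1)) * (K + 1) = η / 4 := by field_simp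
    set τ := η / (4 * (K + 1))
    obtain ⟨y, hy, hyz⟩ := between_point hX x z hε.le hzε.le hτ
    refine ⟨y, hy.le, ?_⟩
    by_cases hyε : dist y z ≤ ε
    · have := le_supBall (ε := ε) hM (show dist z y ≤ ε by rwa [dist_comm])
      linarith
    push Not at hyε
    obtain ⟨z', hz', hzz⟩ := between_point hX y z hε.le hyε.le hτ
    have h1 := le_supBall (ε := ε) hM (show dist z' y ≤ ε by rw [dist_comm]; exact hz'.le)
    have h2 := hlip z z'
    rw [dist_comm] at h2
    have h3 := mul_le_mul_of_nonneg_left (show dist z' z ≤ 2 * τ by linarith) hK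
    nlinarith

lemma cca_bound {Y : Set X} (hY : Y.Nonempty) {u : X → ℝ} (hu : Continuous u) (hcc : CCA Y u)
    {M : ℝ} (hM : ∀ y ∈ Y, u y ≤ M) (x : X) : u x ≤ M := by
  by_contra hcon
  push Not at hcon
  obtain ⟨y0, hy0⟩ := hY
  have hUo : IsOpen {x | M < u x} := isOpen_lt continuous_const hu
  have := hcc {x | M < u x} hUo (fun p hp hpY => absurd (hM p hpY) (not_le.2 hp)) y0
    (not_lt.2 (hM y0 hy0)) M 0 le_rfl (by
      intro p hp
      have := not_mem_of_frontier hUo hp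
      simp only [Set.mem_ofPred_eq, not_lt] at this
      linarith) x hcon
  linarith

lemma cc_unique (hX : IsLengthSpace X) {Y : Set X} (hY : Y.Nonempty) {u v : X → ℝ} {K M : ℝ}
    (hK : 0 ≤ K) (hu : RLip K u) (hv : RLip K v) (huv : ∀ y ∈ Y, u y = v y)
    (hM : ∀ y ∈ Y, |u y| ≤ M) (hu1 : CCA Y u) (hu2 : CCA Y (fun x => - u x)) (hv1 : CCA Y v)
    (hv2 : CCA Y (fun x => - v x)) (x : X) : u x ≤ v x := by
  haveI := length_preconnected hX
  have ub : ∀ x, u x ≤ M := cca_bound hY hu.cont hu1 fun y hy => (abs_le.1 (hM y hy)).2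
  have ub' : ∀ x, - u x ≤ M := cca_bound hY hu.neg.cont hu2 fun y hy => by
    have := (abs_le.1 (hM y hy)).1
    linarith
  have vb : ∀ x, v x ≤ M := cca_bound hY hv.cont hv1 fun y hy => by
    rw [← huv y hy]; exact (abs_le.1 (hM y hy)).2
  have vb' : ∀ x, - v x ≤ M := cca_bound hY hv.neg.cont hv2 fun y hy => by
    rw [← huv y hy]
    have := (abs_le.1 (hM y hy)).1
    linarith
  apply le_of_forall_pos_le_add
  intro η hη
  have hε : 0 < η / (6 * (K + 1)) := by positivity
  have hε' : η / (6 * (K + 1)) * (6 * (K + 1)) = η := by field_simp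
  set ε := η / (6 * (K + 1))
  set S : Set X := {x | ∃ y ∈ Y, dist x y < 2 * ε} with hS
  have hnS : ∀ x, x ∉ S → ∀ y ∈ Y, 2 * ε ≤ dist x y := by
    intro x hx y hy
    by_contra hlt
    push Not at hlt
    exact hx ⟨y, hy, hlt⟩
  have hSne : S.Nonempty := by
    obtain ⟨y, hy⟩ := hY
    exact ⟨y, y, hy, by simp; exact hε⟩
  have main := disc_main (ε := ε) hε hSne (u := supBall ε u)
    (v := fun x => - supBall ε (fun x => - v x) x) (M := M) (β := 6 * K * ε)
    (fun x => by
      have h1 := supBall_le hε.le (u := u) (x := x) (fun y _ => ub y)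
      have h2 := le_supBall (ε := ε) ub (show dist x x ≤ ε by simp; exact hε.le)
      have := ub' x
      exact abs_le.2 ⟨by linarith, h1⟩)
    (fun x => by
      have h1 := supBall_le hε.le (u := fun x => - v x) (x := x) (fun y _ => vb' y)
      have h2 := le_supBall (ε := ε) vb' (show dist x x ≤ ε by simp; exact hε.le)
      have := vb x
      exact abs_le.2 ⟨by linarith, by linarith⟩)
    (by
      rintro p ⟨y, hy, hpy⟩
      have h1 : supBall ε u p ≤ u p + K * ε := supBall_le hε.le fun q hq => by
        have := hu q p
        have := mul_le_mul_of_nonneg_left hq hK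
        linarith
      have h2 : supBall ε (fun x => - v x) p ≤ - v p + K * ε := supBall_le hε.le fun q hq => by
        have := hv.neg q p
        have := mul_le_mul_of_nonneg_left hq hK
        linarith
      have h3 := hu p y
      have h4 := hv.neg p y
      have h5 := mul_le_mul_of_nonneg_left hpy.le hK
      have h6 := huv y hy
      linarith)
    (fun x hx => dsub_supBall hX hK hu ub hu1 hε (hnS x hx))
    (fun x hx => by
      have := dsub_supBall hX hK hv.neg vb' hv2 hε (hnS x hx)
      simpa using this) x
  have h1 := le_supBall (ε := ε) ub (show dist x x ≤ ε by simp; exact hε.le)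
  have h2 := le_supBall (ε := ε) vb' (show dist x x ≤ ε by simp; exact hε.le)
  nlinarith

lemma lipOn_neg (u : X → ℝ) (S : Set X) : lipOn (fun x => - u x) S = lipOn u S := by
  unfold lipOn
  have : ∀ x y, |(-u x) - (-u y)| = |u x - u y| := fun x y => by
    rw [← abs_neg]; congr 1; ring
  simp only [this]

lemma RLip_of_AM {Y : Set X} {F u : X → ℝ} (h : IsAMExtension Y F u) :
    ∃ K, 0 ≤ K ∧ RLip K u := by
  have hLe : lipOn u Set.univ = ENNReal.ofReal (lipOn u Set.univ).toReal :=
    (ENNReal.ofReal_toReal h.1.ne).symm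
  have := (lipOn_le_iff ENNReal.toReal_nonneg).1 hLe.le
  exact ⟨_, ENNReal.toReal_nonneg, fun x y => this x trivial y trivial⟩

lemma RLip.mono {K L : ℝ} {u : X → ℝ} (h : RLip K u) (hKL : K ≤ L) : RLip L u := fun x y =>
  (h x y).trans (mul_le_mul_of_nonneg_right hKL dist_nonneg)

lemma AM_le (hX : IsLengthSpace X) {Y : Set X} (hY : Y.Nonempty) {F u v : X → ℝ} {M : ℝ}
    (hM : ∀ y ∈ Y, |F y| ≤ M) (hu : IsAMExtension Y F u) (hv : IsAMExtension Y F v) (x : X) :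
    u x ≤ v x := by
  obtain ⟨K, hK, hKu⟩ := RLip_of_AM hu
  obtain ⟨L, hL, hLv⟩ := RLip_of_AM hv
  have hneg : ∀ w : X → ℝ, Continuous w → IsAMExtension Y F w → CCA Y (fun x => - w x) := by
    intro w hw h
    refine CCA_of_AM hX hw.neg fun U hU hUY => ?_
    rw [lipOn_neg, lipOn_neg]
    exact h.2.2 U hU hUY
  exact cc_unique hX hY (K := max K L) (M := M) (le_max_of_le_left hK)
    (hKu.mono (le_max_left _ _)) (hLv.mono (le_max_right _ _))
    (fun y hy => (hu.2.1 hy).trans (hv.2.1 hy).symm)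
    (fun y hy => by rw [hu.2.1 hy]; exact hM y hy)
    (CCA_of_AM hX hKu.cont hu.2.2) (hneg u hKu.cont hu)
    (CCA_of_AM hX hLv.cont hv.2.2) (hneg v hLv.cont hv) x

end AMHelpers

/-- Every bounded Lipschitz function `F` on a nonempty subset `Y` of a length space `X`
admits a unique absolutely minimal extension to `X`. -/
theorem stmt0 {X : Type*} [MetricSpace X] (hX : IsLengthSpace X)
    (Y : Set X) (hY : Y.Nonempty) (F : X → ℝ)
    (hFlip : ∃ K : NNReal, LipschitzOnWith K F Y)
    (hFbdd : ∃ M : ℝ, ∀ y ∈ Y, |F y| ≤ M) :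
    ∃! u : X → ℝ, IsAMExtension Y F u := by
  obtain ⟨K, hK⟩ := hFlip
  obtain ⟨M, hM⟩ := hFbdd
  obtain ⟨u, hu, huF, h1, h2⟩ := exists_CC hX K.2 hY (F := F) (fun x hx y hy => by
    have := hK.dist_le_mul x hx y hy
    rw [Real.dist_eq] at this
    exact (le_abs_self _).trans this)
  have hAM : IsAMExtension Y F u := by
    refine ⟨?_, fun y hy => huF y hy, fun U hU hUY => AM_of_CCA K.2 hu h1 h2 U hU hUY⟩
    exact lt_of_le_of_lt ((lipOn_le_iff K.2).2 fun x _ y _ => hu x y) ENNReal.ofReal_lt_top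
  refine ⟨u, hAM, fun v hv => funext fun x => ?_⟩
  exact le_antisymm (AM_le hX hY hM hv hAM x) (AM_le hX hY hM hAM hv x)


end
end

section
/- There exist a length space X, a nonempty subset Y ⊆ X, a nonnegative Lipschitz function F : Y → ℝ, and two functions u₁, u₂ : X → ℝ with u₁ ≠ u₂ such that both u₁ and u₂ are absolutely minimal (AM) extensions of F. (In particular, uniqueness of AM extensions can fail for unbounded nonnegative Lipschitz boundary data.) -/
open Metric Set

noncomputable section

/-! ### The universal comb tree -/

abbrev PosR := {t : ℝ // 0 < t}

def Tr : Type := List PosR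

namespace Tr

def nrm : List PosR → ℝ
  | [] => 0
  | a :: l => a.1 + nrm l

def dd : List PosR → List PosR → ℝ
  | [], m => nrm m
  | a :: l, [] => a.1 + nrm l
  | a :: l, b :: m => if a.1 = b.1 then dd l m else |a.1 - b.1| + nrm l + nrm m

lemma nrm_nonneg (l : List PosR) : 0 ≤ nrm l := by
  induction l with
  | nil => simp [nrm]
  | cons a l ih => have := a.2; simp only [nrm]; linarith

lemma nrm_pos {l : List PosR} (h : l ≠ []) : 0 < nrm l := by
  cases l with
  | nil => exact absurd rfl h
  | cons a l => have := a.2; have := nrm_nonneg l; simp only [nrm]; linarith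

lemma dd_nil_right (l : List PosR) : dd l [] = nrm l := by
  cases l <;> simp [dd, nrm]

lemma dd_self (l : List PosR) : dd l l = 0 := by
  induction l with
  | nil => simp [dd, nrm]
  | cons a l ih => simp [dd, ih]

lemma dd_comm (l m : List PosR) : dd l m = dd m l := by
  induction l generalizing m with
  | nil => rw [dd_nil_right]; simp [dd]
  | cons a l ih =>
    cases m with
    | nil => simp [dd, nrm]
    | cons b m =>
      simp only [dd]
      by_cases h : a.1 = b.1
      · simp [h, ih]
      · rw [if_neg h, if_neg (Ne.symm h), abs_sub_comm]; ring

lemma dd_nonneg (l m : List PosR) : 0 ≤ dd l m := by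
  induction l generalizing m with
  | nil => exact nrm_nonneg m
  | cons a l ih =>
    cases m with
    | nil => rw [dd_nil_right]; exact nrm_nonneg _
    | cons b m =>
      simp only [dd]
      split_ifs
      · exact ih m
      · have := nrm_nonneg l; have := nrm_nonneg m; positivity

lemma nrm_le (l m : List PosR) : nrm l ≤ nrm m + dd l m := by
  induction l generalizing m with
  | nil => have := nrm_nonneg m; simp only [nrm, dd]; linarith
  | cons a l ih =>
    cases m with
    | nil => simp [dd, nrm]
    | cons b m =>
      simp only [dd, nrm]
      split_ifs with h
      · have := ih m; linarith
      · have := nrm_nonneg m; have := le_abs_self (a.1 - b.1); linarith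

lemma dd_le_nrm (l m : List PosR) : dd l m ≤ nrm l + nrm m := by
  induction l generalizing m with
  | nil => simp [nrm, dd]
  | cons a l ih =>
    cases m with
    | nil => simp [dd, nrm]
    | cons b m =>
      have ha := a.2
      have hb := b.2
      simp only [dd, nrm]
      split_ifs with h
      · have := ih m; linarith
      · have : |a.1 - b.1| ≤ a.1 + b.1 := by rw [abs_le]; constructor <;> linarith
        linarith

lemma dd_tri (l m k : List PosR) : dd l k ≤ dd l m + dd m k := by
  induction l generalizing m k with
  | nil =>
    have := nrm_le k m
    rw [dd_comm k m] at this
    simpa [dd] using this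
  | cons a l ih =>
    cases k with
    | nil => rw [dd_nil_right, dd_nil_right]; have := nrm_le (a :: l) m; linarith
    | cons b k =>
      cases m with
      | nil => rw [dd_nil_right]; exact dd_le_nrm _ _
      | cons e m =>
        have h1 := nrm_le l m
        have h2 := nrm_le k m
        rw [dd_comm k m] at h2
        have h3 := dd_le_nrm l k
        have h4 := nrm_nonneg m
        have h5 := abs_sub_le a.1 e.1 b.1
        have h6 := ih m k
        have h7 := abs_nonneg (a.1 - e.1)
        have h8 := abs_nonneg (e.1 - b.1)
        simp only [dd]
        by_cases hab : a.1 = b.1 <;> by_cases hae : a.1 = e.1 <;> by_cases heb : e.1 = b.1 <;>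
          simp only [hab, hae, heb, if_true, if_false] at * <;> first | linarith | skip
        all_goals split_ifs <;> simp_all <;> linarith

lemma eq_of_dd (l m : List PosR) (h : dd l m = 0) : l = m := by
  induction l generalizing m with
  | nil =>
    by_contra hm
    have := nrm_pos (Ne.symm hm)
    simp only [dd] at h; linarith
  | cons a l ih =>
    cases m with
    | nil => rw [dd_nil_right] at h; have := nrm_pos (List.cons_ne_nil a l); linarith
    | cons b m =>
      simp only [dd] at h
      split_ifs at h with hab
      · rw [ih m h, Subtype.ext hab]
      · have := nrm_nonneg l
        have := nrm_nonneg m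
        have := abs_pos.2 (sub_ne_zero.2 hab)
        linarith

instance : MetricSpace Tr where
  dist := dd
  dist_self := dd_self
  dist_comm := dd_comm
  dist_triangle := dd_tri
  eq_of_dist_eq_zero := fun {l m} h => eq_of_dd l m h

/-- root -/
def rt : Tr := ([] : List PosR)
def cons (t : PosR) (x : Tr) : Tr := List.cons t x
def nm (x : Tr) : ℝ := nrm x

lemma dist_def (x y : Tr) : dist x y = dd x y := rfl
lemma nm_nonneg (x : Tr) : 0 ≤ nm x := nrm_nonneg x
lemma dist_rt (x : Tr) : dist x rt = nm x := dd_nil_right x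
lemma dist_cons (t : PosR) (x y : Tr) : dist (cons t x) (cons t y) = dist x y := by
  change dd (List.cons t x) (List.cons t y) = dd x y
  simp [dd]
lemma dist_cons_ne {t b : PosR} (h : t.1 ≠ b.1) (x y : Tr) :
    dist (cons t x) (cons b y) = |t.1 - b.1| + nm x + nm y := by
  change dd (List.cons t x) (List.cons b y) = |t.1 - b.1| + nrm x + nrm y
  simp [dd, h]
lemma isometry_cons (t : PosR) : Isometry (cons t) := Isometry.of_dist_eq (dist_cons t)

/-- the initial ray -/
def ray (t : ℝ) : Tr := if h : 0 < t then cons ⟨t, h⟩ rt else rt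
lemma ray_pos {t : ℝ} (h : 0 < t) : ray t = cons ⟨t, h⟩ rt := dif_pos h
lemma ray_zero : ray 0 = rt := dif_neg (lt_irrefl _)
lemma nm_cons (t : PosR) (x : Tr) : nm (cons t x) = t.1 + nm x := rfl
lemma nm_rt : nm rt = 0 := rfl
lemma dist_ray {s t : ℝ} (hs : 0 ≤ s) (ht : 0 ≤ t) : dist (ray s) (ray t) = |s - t| := by
  rcases hs.eq_or_lt with rfl | hs
  · rcases ht.eq_or_lt with rfl | ht
    · simp
    · rw [ray_zero, dist_comm, dist_rt, ray_pos ht, nm_cons, nm_rt]; simp [abs_of_pos ht]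
  · rcases ht.eq_or_lt with rfl | ht
    · rw [ray_zero, dist_rt, ray_pos hs, nm_cons, nm_rt]; simp [abs_of_pos hs]
    · rw [ray_pos hs, ray_pos ht]
      by_cases h : s = t
      · subst h; simp
      · rw [dist_cons_ne h, nm_rt]; simp

end Tr

/-! ### Geodesics -/

def Geo {X : Type*} [MetricSpace X] (x y : X) : Prop :=
  ∃ f : ℝ → X, LipschitzWith 1 f ∧ f 0 = x ∧ f (dist x y) = y

lemma Geo.trans {X : Type*} [MetricSpace X] {x y z : X} (h1 : Geo x y) (h2 : Geo y z)
    (h : dist x z = dist x y + dist y z) : Geo x z := by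
  obtain ⟨f, hf, f0, f1⟩ := h1
  obtain ⟨g, hg, g0, g1⟩ := h2
  have hf' : ∀ s t, dist (f s) (f t) ≤ |s - t| := fun s t => by
    simpa [Real.dist_eq] using hf.dist_le_mul s t
  have hg' : ∀ s t, dist (g s) (g t) ≤ |s - t| := fun s t => by
    simpa [Real.dist_eq] using hg.dist_le_mul s t
  set D := dist x y
  have key : ∀ s t, s ≤ D → D < t → dist (f s) (g (t - D)) ≤ |s - t| := by
    intro s t hs ht
    have h3 := dist_triangle (f s) y (g (t - D))
    have h4 := hf' s D
    have h5 := hg' 0 (t - D)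
    rw [f1] at h4
    rw [g0] at h5
    rw [abs_of_nonpos (by linarith)] at h4 h5 ⊢
    linarith
  refine ⟨fun t => if t ≤ D then f t else g (t - D), ?_, ?_, ?_⟩
  · refine LipschitzWith.of_dist_le_mul fun s t => ?_
    simp only [NNReal.coe_one, one_mul, Real.dist_eq]
    split_ifs with hs ht ht
    · exact hf' s t
    · exact key s t hs (not_le.1 ht)
    · rw [dist_comm, abs_sub_comm]; exact key t s ht (not_le.1 hs)
    · simpa using hg' (s - D) (t - D)
  · simp [D, dist_nonneg, f0]
  · simp only [h]
    split_ifs with h6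
    · have : dist y z = 0 := le_antisymm (by linarith) dist_nonneg
      rw [this, add_zero, f1, dist_eq_zero.1 this]
    · simp [g1]

lemma Geo.symm {X : Type*} [MetricSpace X] {x y : X} (h1 : Geo x y) : Geo y x := by
  obtain ⟨f, hf, f0, f1⟩ := h1
  refine ⟨fun t => f (dist x y - t), ?_, by simpa, by simpa [dist_comm y x]⟩
  refine LipschitzWith.of_dist_le_mul fun s t => ?_
  have := hf.dist_le_mul (dist x y - s) (dist x y - t)
  rw [Real.dist_eq, show dist x y - s - (dist x y - t) = t - s by ring, abs_sub_comm] at this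
  rwa [Real.dist_eq]

namespace Tr

lemma Geo.cons {x y : Tr} (t : PosR) (h : Geo x y) : Geo (cons t x) (cons t y) := by
  obtain ⟨f, hf, f0, f1⟩ := h
  refine ⟨fun s => Tr.cons t (f s), ?_, by simp [f0], by simp [dist_cons, f1]⟩
  have := (isometry_cons t).lipschitz.comp hf
  rwa [mul_one] at this

lemma geo_ray {s t : ℝ} (hs : 0 ≤ s) (hst : s ≤ t) : Geo (ray s) (ray t) := by
  refine ⟨fun r => ray (max s (min t (s + r))), ?_, ?_, ?_⟩
  · refine LipschitzWith.of_dist_le_mul fun a b => ?_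
    rw [dist_ray (le_max_of_le_left hs) (le_max_of_le_left hs)]
    simp only [NNReal.coe_one, one_mul, Real.dist_eq]
    refine (abs_max_sub_max_le_max _ _ _ _).trans (max_le (by simp) ?_)
    exact (abs_min_sub_min_le_max _ _ _ _).trans (by simp)
  · simp [hst]
  · simp only [dist_ray hs (hs.trans hst), abs_sub_comm s t, abs_of_nonneg (sub_nonneg.2 hst)]
    simp [hst]

lemma ind {p : Tr → Prop} (h0 : p rt) (hc : ∀ t x, p x → p (cons t x)) (x : Tr) : p x := by
  change List PosR at x
  induction x with
  | nil => exact h0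
  | cons a l ih => exact hc a l ih

lemma geo_rt (x : Tr) : Geo rt x := by
  induction x using ind with
  | h0 => have := geo_ray (le_refl 0) (le_refl 0); rwa [ray_zero] at this
  | hc a l ih =>
    have h1 := geo_ray (le_refl 0) a.2.le
    rw [ray_zero, ray_pos a.2] at h1
    refine h1.trans (Geo.cons a ih) ?_
    rw [dist_cons, dist_comm, dist_comm rt, dist_comm rt, dist_rt, dist_rt, dist_rt]
    simp [nm_cons, nm_rt]

lemma geo (x y : Tr) : Geo x y := by
  induction x using ind generalizing y with
  | h0 => exact geo_rt y
  | hc a l ih =>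
    induction y using ind with
    | h0 => exact (geo_rt _).symm
    | hc b m =>
      by_cases hab : a.1 = b.1
      · obtain rfl := Subtype.ext hab
        exact Geo.cons a (ih m)
      · have h0 : Geo (Tr.cons a rt) (Tr.cons b rt) := by
          rw [← ray_pos a.2, ← ray_pos b.2]
          rcases le_total a.1 b.1 with h | h
          · exact geo_ray a.2.le h
          · exact (geo_ray b.2.le h).symm
        have h1 : Geo (Tr.cons a l) (Tr.cons a rt) := Geo.cons a (geo_rt l).symm
        have h2 : Geo (Tr.cons b rt) (Tr.cons b m) := Geo.cons b (geo_rt m)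
        refine (h1.trans h0 ?_).trans h2 ?_
        · rw [dist_cons_ne hab, dist_cons, dist_cons_ne hab, dist_rt, nm_rt]; ring
        · rw [dist_cons_ne hab, dist_cons, dist_cons_ne hab, dist_comm rt, dist_rt, nm_rt]; ring

end Tr

lemma isLengthSpace_of_geo {X : Type*} [MetricSpace X] (h : ∀ x y : X, Geo x y) :
    IsLengthSpace X := by
  intro x y
  refine le_antisymm (le_iInf fun γ => ?_) ?_
  · have := eVariationOn.edist_le (fun t => γ t) (mem_univ (0 : unitInterval)) (mem_univ 1)
    simpa [pathLength] using this
  · obtain ⟨f, hf, f0, f1⟩ := h x y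
    let γ : Path x y :=
      { toFun := fun t => f (dist x y * t)
        continuous_toFun := hf.continuous.comp (by fun_prop)
        source' := by simp [f0]
        target' := by simp [f1] }
    refine (iInf_le _ γ).trans ?_
    have hmono : MonotoneOn (fun t : unitInterval => dist x y * (t : ℝ)) univ := by
      intro a _ b _ hab
      exact mul_le_mul_of_nonneg_left hab dist_nonneg
    have h1 : pathLength γ ≤ (1 : NNReal) *
        eVariationOn (fun t : unitInterval => dist x y * (t : ℝ)) univ :=
      (hf.lipschitzOnWith (s := univ)).comp_eVariationOn_le (fun _ _ => mem_univ _)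
    have h2 := (hmono.eVariationOn_eq (mem_univ (0 : unitInterval)) (mem_univ 1)).le
    have h3 : (univ : Set unitInterval) ∩ Icc 0 1 = univ := by
      ext t; simp [unitInterval.nonneg', unitInterval.le_one']
    rw [h3] at h2
    refine h1.trans ?_
    rw [ENNReal.coe_one, one_mul]
    refine h2.trans ?_
    simp [edist_dist]

/-! ### A local criterion for absolute minimality -/

open Filter Topology

/-- `y` can be reached from `x` inside the cone of slope `s` below `f`. -/
def Reach_s2 {X : Type*} [MetricSpace X] (f : X → ℝ) (s : ℝ) (x y : X) : Prop :=
  ∃ C : Set X, IsPreconnected C ∧ x ∈ C ∧ y ∈ C ∧ ∀ p ∈ C, f x + s * dist x p ≤ f p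

lemma Reach_s2.mono {X : Type*} [MetricSpace X] {f : X → ℝ} {s s' : ℝ} {x y : X}
    (h : Reach_s2 f s x y) (hs : s' ≤ s) : Reach_s2 f s' x y := by
  obtain ⟨C, h1, h2, h3, h4⟩ := h
  refine ⟨C, h1, h2, h3, fun p hp => ?_⟩
  have := mul_le_mul_of_nonneg_right hs (dist_nonneg (x := x) (y := p))
  have := h4 p hp
  linarith

lemma Reach_s2.trans {X : Type*} [MetricSpace X] {f : X → ℝ} {s : ℝ} {x y z : X} (hs : 0 ≤ s)
    (h : Reach_s2 f s x y) (h' : Reach_s2 f s y z) : Reach_s2 f s x z := by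
  obtain ⟨C, h1, h2, h3, h4⟩ := h
  obtain ⟨D, k1, k2, k3, k4⟩ := h'
  refine ⟨C ∪ D, h1.union y h3 k2 k1, Or.inl h2, Or.inr k3, ?_⟩
  rintro p (hp | hp)
  · exact h4 p hp
  · have a := h4 y h3
    have b := k4 p hp
    have c := mul_le_mul_of_nonneg_left (dist_triangle x y p) hs
    linarith

lemma le_of_local_slope {f : ℝ → ℝ} {T K : ℝ} (hT : 0 ≤ T) (hf : Continuous f)
    (h : ∀ t ∈ Ico 0 T, ∀ᶠ z in 𝓝[>] t, f z - f t ≤ K * (z - t)) : f T ≤ f 0 + K * T := by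
  have := image_le_of_liminf_slope_right_le_deriv_boundary (f := f) (a := 0) (b := T)
    hf.continuousOn (B := fun t => f 0 + K * t) (B' := fun _ => K) (by simp)
    (by fun_prop) (fun x _ => by
      simpa using (((hasDerivAt_id x).const_mul K).const_add (f 0)).hasDerivWithinAt)
    (fun x hx r hr => by
      refine Eventually.frequently ?_
      filter_upwards [h x hx, self_mem_nhdsWithin] with z hz hxz
      have hxz : 0 < z - x := sub_pos.2 hxz
      rw [slope_def_field, div_lt_iff₀ hxz]
      nlinarith)
  exact this (right_mem_Icc.2 hT)

lemma path_bound {X : Type*} [MetricSpace X] {u : X → ℝ} (hu : Continuous u) {U : Set X} {K : ℝ}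
    (hK : 0 ≤ K) (h : ∀ x ∈ U, ∀ᶠ y in 𝓝 x, |u y - u x| ≤ K * dist y x)
    {γ : ℝ → X} (hγ : LipschitzWith 1 γ) {T : ℝ} (hT : 0 ≤ T) (hU : ∀ t ∈ Ico 0 T, γ t ∈ U) :
    |u (γ T) - u (γ 0)| ≤ K * T := by
  have key : ∀ t ∈ Ico 0 T, ∀ᶠ z in 𝓝[>] t, |u (γ z) - u (γ t)| ≤ K * (z - t) := by
    intro t ht
    have h1 := (hγ.continuous.tendsto t).eventually (h _ (hU t ht))
    filter_upwards [h1.filter_mono nhdsWithin_le_nhds, self_mem_nhdsWithin] with z hz htz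
    have h2 := hγ.dist_le_mul z t
    rw [Real.dist_eq, abs_of_pos (sub_pos.2 htz)] at h2
    simp only [NNReal.coe_one, one_mul] at h2
    exact hz.trans (mul_le_mul_of_nonneg_left h2 hK)
  have c := hu.comp hγ.continuous
  have a := le_of_local_slope (f := fun t => u (γ t)) (K := K) hT c (fun t ht => by
    filter_upwards [key t ht] with z hz using (le_abs_self _).trans hz)
  have b := le_of_local_slope (f := fun t => - u (γ t)) (K := K) hT c.neg (fun t ht => by
    filter_upwards [key t ht] with z hz
    have := (neg_abs_le _).trans' (neg_le_neg hz)
    linarith)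
  rw [abs_le]
  constructor <;> linarith

lemma lipOn_le {X : Type*} [MetricSpace X] {u : X → ℝ} {S : Set X} {K : ℝ}
    (h : ∀ x ∈ S, ∀ y ∈ S, |u x - u y| ≤ K * dist x y) : lipOn u S ≤ ENNReal.ofReal K := by
  refine iSup_le fun x => iSup_le fun hx => iSup_le fun y => iSup_le fun hy => iSup_le fun hxy => ?_
  refine ENNReal.ofReal_le_ofReal ?_
  rw [div_le_iff₀ (dist_pos.2 hxy)]
  exact h x hx y hy

lemma le_lipOn {X : Type*} [MetricSpace X] {u : X → ℝ} {S : Set X} (hS : lipOn u S ≠ ⊤)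
    {x y : X} (hx : x ∈ S) (hy : y ∈ S) : |u x - u y| ≤ (lipOn u S).toReal * dist x y := by
  by_cases hxy : x = y
  · subst hxy; simp
  · rw [← div_le_iff₀ (dist_pos.2 hxy)]
    refine (ENNReal.ofReal_le_iff_le_toReal hS).1 ?_
    exact le_iSup_of_le x <| le_iSup_of_le hx <| le_iSup_of_le y <| le_iSup_of_le hy <|
      le_iSup_of_le hxy le_rfl

lemma Reach_s2.frontier {X : Type*} [MetricSpace X] {f : X → ℝ} {s : ℝ} {x y : X}
    (h : Reach_s2 f s x y) {U : Set X} (hU : IsOpen U) (hx : x ∈ U) (hy : y ∉ U) :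
    ∃ p ∈ frontier U, f x + s * dist x p ≤ f p := by
  obtain ⟨C, h1, h2, h3, h4⟩ := h
  by_contra hcon
  push Not at hcon
  have hsub : C ⊆ U ∪ (closure U)ᶜ := by
    intro p hp
    by_cases hpU : p ∈ closure U
    · left
      by_contra hpn
      have : p ∈ _root_.frontier U := by
        rw [hU.frontier_eq]; exact ⟨hpU, hpn⟩
      exact absurd (h4 p hp) (not_le.2 (hcon p this))
    · exact Or.inr hpU
  have := h1.subset_left_of_subset_union hU isClosed_closure.isOpen_compl
    (disjoint_left.2 fun p hp hp' => hp' (subset_closure hp)) hsub ⟨x, h2, hx⟩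
  exact hy (this h3)

/-- local goodness of `u` at `x`. -/
def GoodAt {X : Type*} [MetricSpace X] (Y : Set X) (K : ℝ) (u : X → ℝ) (x : X) : Prop :=
  ∃ s, 0 ≤ s ∧ s ≤ K ∧ (∀ᶠ y in 𝓝 x, |u y - u x| ≤ s * dist y x) ∧
    (x ∈ Y ∨ s = 0 ∨ ((∃ y ∈ Y, Reach_s2 u s x y) ∧ ∃ y ∈ Y, Reach_s2 (fun z => - u z) s x y))

lemma continuous_of_goodAt {X : Type*} [MetricSpace X] {Y : Set X} {K : ℝ} {u : X → ℝ}
    (h : ∀ x, GoodAt Y K u x) : Continuous u := by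
  rw [continuous_iff_continuousAt]
  intro x
  obtain ⟨s, _, _, h1, _⟩ := h x
  rw [ContinuousAt, tendsto_iff_dist_tendsto_zero]
  refine squeeze_zero' (Eventually.of_forall fun _ => dist_nonneg) h1 ?_
  have : Continuous fun y => s * dist y x := by fun_prop
  simpa using this.tendsto x

lemma lip_of_goodAt {X : Type*} [MetricSpace X] {Y : Set X} {K : ℝ} {u : X → ℝ} (hK : 0 ≤ K)
    (geo : ∀ x y : X, Geo x y) (h : ∀ x, GoodAt Y K u x) (x y : X) :
    |u x - u y| ≤ K * dist x y := by
  obtain ⟨γ, h1, h2, h3⟩ := geo x y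
  have := path_bound (continuous_of_goodAt h) (U := univ) hK (fun x _ => by
    obtain ⟨s, _, hs, h1, _⟩ := h x
    filter_upwards [h1] with y hy
    exact hy.trans (mul_le_mul_of_nonneg_right hs dist_nonneg)) h1 (dist_nonneg (x := x) (y := y))
    (fun _ _ => mem_univ _)
  rw [h2, h3] at this
  rwa [abs_sub_comm]

lemma goodAt_slope {X : Type*} [MetricSpace X] {Y : Set X} {K : ℝ} {u : X → ℝ} {U : Set X}
    (hU : IsOpen U) (hUY : U ⊆ Yᶜ) {x : X} (hx : x ∈ U) (h : GoodAt Y K u x)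
    {L : ℝ} (hL0 : 0 ≤ L) (hL : ∀ p ∈ frontier U, ∀ q ∈ frontier U, |u p - u q| ≤ L * dist p q) :
    ∀ᶠ y in 𝓝 x, |u y - u x| ≤ L * dist y x := by
  obtain ⟨s, hs0, _, h1, h2⟩ := h
  have hsL : s ≤ L := by
    rcases h2 with h2 | h2 | ⟨⟨y, hy, hr⟩, ⟨z, hz, hr'⟩⟩
    · exact absurd h2 (hUY hx)
    · rw [h2]; exact hL0
    · obtain ⟨p, hp, hp'⟩ := hr.frontier hU hx (fun hh => hUY hh hy)
      obtain ⟨q, hq, hq'⟩ := hr'.frontier hU hx (fun hh => hUY hh hz)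
      have hpx : 0 < dist x p := by
        refine dist_pos.2 fun hh => ?_
        rw [hU.frontier_eq] at hp
        exact hp.2 (hh ▸ hx)
      have e1 := hL p hp q hq
      have e2 := dist_triangle_left p q x
      have e3 := (le_abs_self _).trans e1
      have e4 := mul_le_mul_of_nonneg_left e2 hL0
      have e5 : 0 ≤ dist x q := dist_nonneg
      by_contra hcon
      push Not at hcon
      nlinarith
  filter_upwards [h1] with y hy
  exact hy.trans (mul_le_mul_of_nonneg_right hsL dist_nonneg)

lemma isAM_of_goodAt {X : Type*} [MetricSpace X] {Y : Set X} {K : ℝ} {u F : X → ℝ} (hK : 0 ≤ K)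
    (geo : ∀ x y : X, Geo x y) (h : ∀ x, GoodAt Y K u x) (hF : EqOn u F Y) :
    IsAMExtension Y F u := by
  have hc := continuous_of_goodAt h
  refine ⟨(lipOn_le (fun x _ y _ => lip_of_goodAt hK geo h x y)).trans_lt ENNReal.ofReal_lt_top,
    hF, fun U hU hUY => le_antisymm ?_ ?_⟩
  · by_cases htop : lipOn u (frontier U) = ⊤
    · rw [htop]; exact le_top
    set L := (lipOn u (frontier U)).toReal with hLdef
    have hL0 : 0 ≤ L := ENNReal.toReal_nonneg
    have hL : ∀ p ∈ frontier U, ∀ q ∈ frontier U, |u p - u q| ≤ L * dist p q :=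
      fun p hp q hq => le_lipOn htop hp hq
    have hloc : ∀ x ∈ U, ∀ᶠ y in 𝓝 x, |u y - u x| ≤ L * dist y x :=
      fun x hx => goodAt_slope hU hUY hx (h x) hL0 hL
    rw [← ENNReal.ofReal_toReal htop]
    refine lipOn_le fun x hx y hy => ?_
    obtain ⟨γ, hγ, g0, g1⟩ := geo x y
    set T := dist x y with hT
    have hT0 : 0 ≤ T := dist_nonneg
    -- leaving the set
    have leaves : ∀ γ : ℝ → X, LipschitzWith 1 γ → γ 0 ∈ U → ∀ t0 ∈ Icc 0 T, γ t0 ∉ U →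
        ∃ t ∈ Icc 0 t0, γ t ∈ frontier U ∧ |u (γ t) - u (γ 0)| ≤ L * t := by
      intro γ hγ h0 t0 ht0 hn
      have hcomp : IsCompact (Icc 0 t0 ∩ γ ⁻¹' Uᶜ) :=
        isCompact_Icc.inter_right (hU.isClosed_compl.preimage hγ.continuous)
      obtain ⟨t, ⟨ht, htU⟩, hleast⟩ := hcomp.exists_isLeast ⟨t0, ⟨ht0.1, le_rfl⟩, hn⟩
      have hlt : ∀ r ∈ Ico 0 t, γ r ∈ U := by
        intro r hr
        by_contra hrU
        exact absurd (hleast ⟨⟨hr.1, hr.2.le.trans ht.2⟩, hrU⟩) (not_le.2 hr.2)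
      have htpos : 0 < t := by
        refine lt_of_le_of_ne ht.1 fun hh => htU ?_
        rw [← hh]; exact h0
      refine ⟨t, ht, ?_, path_bound hc hL0 hloc hγ ht.1 hlt⟩
      rw [hU.frontier_eq]
      refine ⟨?_, htU⟩
      have h3 : Tendsto γ (𝓝[<] t) (𝓝 (γ t)) := (hγ.continuous.tendsto t).mono_left nhdsWithin_le_nhds
      refine mem_closure_of_tendsto h3 ?_
      filter_upwards [Ioo_mem_nhdsLT htpos] with r hr
      exact hlt r ⟨hr.1.le, hr.2⟩
    by_cases hin : ∀ t ∈ Ico 0 T, γ t ∈ U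
    · have := path_bound hc hL0 hloc hγ hT0 hin
      rw [g0, g1] at this
      rwa [abs_sub_comm]
    · push Not at hin
      obtain ⟨t0, ht0, hn⟩ := hin
      obtain ⟨t1, ht1, hf1, hb1⟩ := leaves γ hγ (by rwa [g0]) t0 ⟨ht0.1, ht0.2.le⟩ hn
      have hγ' : LipschitzWith 1 (fun t => γ (T - t)) := by
        refine LipschitzWith.of_dist_le_mul fun s t => ?_
        have := hγ.dist_le_mul (T - s) (T - t)
        rw [Real.dist_eq, show T - s - (T - t) = t - s by ring, abs_sub_comm] at this
        rwa [Real.dist_eq]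
      obtain ⟨t2, ht2, hf2, hb2⟩ := leaves _ hγ' (by simpa [g1] using hy) (T - t0)
        ⟨by linarith [ht0.2], by linarith [ht0.1]⟩ (by simpa using hn)
      simp only [sub_zero, g1] at hb2
      rw [g0] at hb1
      have hb3 := hL _ hf1 _ hf2
      have h4 := hγ.dist_le_mul t1 (T - t2)
      have h5 : dist t1 (T - t2) = T - t2 - t1 := by
        rw [Real.dist_eq, abs_sub_comm, abs_of_nonneg]; linarith [ht1.2, ht2.2]
      simp only [h5, NNReal.coe_one, one_mul] at h4
      have h6 := mul_le_mul_of_nonneg_left h4 hL0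
      have e1 : |u x - u y| ≤ |u (γ t1) - u x| + |u (γ t1) - u (γ (T - t2))|
          + |u (γ (T - t2)) - u y| := by
        have := abs_sub_le (u x) (u (γ t1)) (u y)
        have := abs_sub_le (u (γ t1)) (u (γ (T - t2))) (u y)
        rw [abs_sub_comm (u (γ t1)) (u x)]
        linarith
      have : L * T = L * t1 + L * (T - t2 - t1) + L * t2 := by ring
      linarith
  · by_cases htop : lipOn u U = ⊤
    · rw [htop]; exact le_top
    rw [← ENNReal.ofReal_toReal htop]
    refine lipOn_le fun x hx y hy => ?_
    have hcl : IsClosed {p : X × X | |u p.1 - u p.2| ≤ (lipOn u U).toReal * dist p.1 p.2} :=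
      isClosed_le (by fun_prop) (by fun_prop)
    have : closure (U ×ˢ U) ⊆ {p : X × X | |u p.1 - u p.2| ≤ (lipOn u U).toReal * dist p.1 p.2} :=
      hcl.closure_subset_iff.2 fun p hp => le_lipOn htop hp.1 hp.2
    rw [closure_prod_eq] at this
    exact this (mk_mem_prod (frontier_subset_closure hx) (frontier_subset_closure hy))

/-! ### The state machine -/

/-- A live state: values `a ≤ b` of the two functions, with up slopes `c`, `s`. -/
structure St where
  a : ℝ
  b : ℝ
  c : ℝ
  s : ℝ
  ha : 0 ≤ a
  hab : a ≤ b
  hc : 0 < c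
  hs : 0 < s
  hcM : c ≤ 8
  hsM : s ≤ 8
  hM : s ^ 2 < 8 * c
  hne : a < b ∨ c < s

namespace St

variable (st : St)

def cp : ℝ := (st.c + 8 * st.c ^ 2 / st.s ^ 2) / 2

lemma cp_gt : st.c < st.cp := by
  have h1 := st.hc
  have h2 := st.hs
  have h3 := st.hM
  have : st.c < 8 * st.c ^ 2 / st.s ^ 2 := by
    rw [lt_div_iff₀ (by positivity)]; nlinarith
  unfold cp; linarith

lemma cp_pos : 0 < st.cp := st.hc.trans st.cp_gt

lemma cp_mul : st.cp * st.s ^ 2 < 8 * st.c ^ 2 := by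
  have h1 := st.hc
  have h2 := st.hs
  have h3 := st.hM
  have : 8 * st.c ^ 2 / st.s ^ 2 * st.s ^ 2 = 8 * st.c ^ 2 := by field_simp
  unfold cp
  nlinarith

lemma cp_le (h : st.c ≤ st.s) : st.cp ≤ 8 := by
  have h1 := st.hc
  have h2 := st.hs
  have h3 := st.hcM
  have : 8 * st.c ^ 2 / st.s ^ 2 ≤ 8 := by
    rw [div_le_iff₀ (by positivity)]; nlinarith
  unfold cp; linarith

lemma exists_ell : ∃ l : ℝ, 0 < l ∧ 0 < st.a + st.c * l - st.cp ∧
    st.cp * (st.b + st.s * l) ^ 2 < 8 * (st.a + st.c * l - st.cp) ^ 2 := by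
  have hD := sub_pos.2 st.cp_mul
  have hc := st.hc
  have ha := st.ha
  have hcp := st.cp_pos
  set D := 8 * st.c ^ 2 - st.cp * st.s ^ 2 with hDdef
  set B := 16 * st.c * (st.a - st.cp) - 2 * st.cp * st.b * st.s with hB
  set E := 8 * (st.a - st.cp) ^ 2 - st.cp * st.b ^ 2 with hE
  have hq1 : 0 < st.cp / st.c := by positivity
  have hq2 : 0 ≤ (|B| + |E|) / D := by positivity
  refine ⟨1 + st.cp / st.c + (|B| + |E|) / D, by positivity, ?_, ?_⟩
  · have : st.c * (st.cp / st.c) = st.cp := by field_simp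
    have : 0 ≤ st.c * ((|B| + |E|) / D) := by positivity
    nlinarith
  · set l := 1 + st.cp / st.c + (|B| + |E|) / D with hl
    have hl1 : 1 ≤ l := by linarith
    have h1 : D + (|B| + |E|) ≤ D * l := by
      have : D * ((|B| + |E|) / D) = |B| + |E| := by field_simp
      have : 0 < D * (st.cp / st.c) := by positivity
      rw [hl]; nlinarith
    have h2 : (D + (|B| + |E|)) * l ≤ D * l * l := mul_le_mul_of_nonneg_right h1 (by linarith)
    have h3 : -|B| * l ≤ B * l := mul_le_mul_of_nonneg_right (neg_abs_le B) (by linarith)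
    have h4 := neg_abs_le E
    have h5 : |E| ≤ |E| * l := le_mul_of_one_le_right (abs_nonneg _) hl1
    have h6 : 0 < D * l * l + B * l + E := by nlinarith
    have h7 : 8 * (st.a + st.c * l - st.cp) ^ 2 - st.cp * (st.b + st.s * l) ^ 2
        = D * l * l + B * l + E := by rw [hDdef, hB, hE]; ring
    linarith

def ell : ℝ := st.exists_ell.choose
lemma ell_pos : 0 < st.ell := st.exists_ell.choose_spec.1
def ay : ℝ := st.a + st.c * st.ell
def bY : ℝ := st.b + st.s * st.ell
def az : ℝ := st.ay - st.cp
lemma az_pos : 0 < st.az := st.exists_ell.choose_spec.2.1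
lemma ell_spec : st.cp * st.bY ^ 2 < 8 * st.az ^ 2 := st.exists_ell.choose_spec.2.2
def len : ℝ := st.az / st.cp
lemma len_pos : 0 < st.len := div_pos st.az_pos st.cp_pos
def sz : ℝ := st.bY * st.cp / st.az

variable {st}

lemma ay_lt (h : st.c ≤ st.s) : st.ay < st.bY := by
  have h1 := st.hab
  have h2 := st.ell_pos
  unfold ay bY
  rcases st.hne with h3 | h3 <;> nlinarith

lemma az_lt (h : st.c ≤ st.s) : st.az < st.bY := by
  have := ay_lt h
  have := st.cp_pos
  unfold az; linarith

lemma bY_pos (h : st.c ≤ st.s) : 0 < st.bY := st.az_pos.trans (az_lt h)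

lemma sz_pos (h : st.c ≤ st.s) : 0 < st.sz :=
  div_pos (mul_pos (bY_pos h) st.cp_pos) st.az_pos

lemma sz_sq (h : st.c ≤ st.s) : st.sz ^ 2 < 8 * st.cp := by
  have h1 := st.az_pos
  have h2 := st.cp_pos
  have h3 := st.ell_spec
  unfold sz
  rw [div_pow, div_lt_iff₀ (by positivity)]
  have := mul_lt_mul_of_pos_right h3 h2
  nlinarith

/-- continuing up from the peak -/
def yst (h : st.c ≤ st.s) : St where
  a := st.ay
  b := st.bY
  c := st.cp
  s := st.s
  ha := by have := st.az_pos; have := st.cp_pos; unfold az at *; linarith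
  hab := (ay_lt h).le
  hc := st.cp_pos
  hs := st.hs
  hcM := st.cp_le h
  hsM := st.hsM
  hM := by have := st.hM; have := st.cp_gt; linarith
  hne := Or.inl (ay_lt h)

/-- a new upward line from the valley -/
def zst (h : st.c ≤ st.s) : St where
  a := st.az
  b := st.bY
  c := st.cp
  s := st.sz
  ha := st.az_pos.le
  hab := (az_lt h).le
  hc := st.cp_pos
  hs := sz_pos h
  hcM := st.cp_le h
  hsM := by
    have := sz_sq h
    have := st.cp_le h
    have := sz_pos h
    nlinarith
  hM := sz_sq h
  hne := Or.inl (az_lt h)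

variable (st)
def top : ℝ := (st.b - st.a) / (st.c - st.s)

lemma top_pos {st : St} (h : ¬ st.c ≤ st.s) : 0 < st.top := by
  have h1 := not_le.1 h
  have h2 : st.a < st.b := by
    rcases st.hne with h3 | h3
    · exact h3
    · linarith
  exact div_pos (by linarith) (by linarith)

lemma top_eq {st : St} (h : ¬ st.c ≤ st.s) : st.a + st.c * st.top = st.b + st.s * st.top := by
  have h1 := not_le.1 h
  have : st.top * (st.c - st.s) = st.b - st.a := by
    unfold top; exact div_mul_cancel₀ _ (by linarith)
  linarith

end St

inductive Nd where
  | dead (v : Bool → ℝ) : Nd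
  | tip (v : ℝ) : Nd
  | up (st : St) : Nd

namespace Nd

def pr (x y : ℝ) : Bool → ℝ := fun i => if i then y else x

def next : Nd → ℝ → Nd
  | dead v, _ => dead v
  | tip v, _ => dead (fun _ => v)
  | up st, t =>
    if h : st.c ≤ st.s then
      if t < st.ell then dead (pr (st.a + st.c * t) (st.b + st.s * t))
      else if t = st.ell then up (St.yst h)
      else if t < st.ell + 1 then dead (pr (st.ay - st.cp * (t - st.ell)) st.bY)
      else if t = st.ell + 1 then up (St.zst h)
      else if t < st.ell + 1 + st.len then
        dead (pr (st.az - st.cp * (t - (st.ell + 1))) (st.bY - st.sz * (t - (st.ell + 1))))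
      else if t = st.ell + 1 + st.len then tip 0
      else dead (fun _ => 0)
    else
      if t < st.top then dead (pr (st.a + st.c * t) (st.b + st.s * t))
      else if t = st.top then tip (st.a + st.c * st.top)
      else dead (fun _ => st.a + st.c * st.top)

def val (i : Bool) : Nd → ℝ
  | dead v => v i
  | tip v => v
  | up st => pr st.a st.b i

def run : Nd → List PosR → Nd
  | n, [] => n
  | n, t :: l => run (next n t.1) l

def u (i : Bool) (n : Nd) (x : Tr) : ℝ := val i (run n x)
def Yn (n : Nd) : Set Tr := {x | ∃ v, run n x = tip v}

def sl (i : Bool) (st : St) : ℝ := pr st.c st.s i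
def slN (i : Bool) : Nd → ℝ
  | up st => sl i st
  | _ => 0

lemma sl_pos (i : Bool) (st : St) : 0 < sl i st := by
  cases i <;> simp [sl, pr, st.hc, st.hs]
lemma sl_le (i : Bool) (st : St) : sl i st ≤ 8 := by
  cases i <;> simp [sl, pr, st.hcM, st.hsM]

lemma u_rt (i : Bool) (n : Nd) : u i n Tr.rt = val i n := rfl
lemma u_cons (i : Bool) (n : Nd) (t : PosR) (x : Tr) :
    u i n (Tr.cons t x) = u i (next n t.1) x := rfl
lemma u_ray {i : Bool} {n : Nd} {t : ℝ} (ht : 0 < t) : u i n (Tr.ray t) = val i (next n t) := by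
  rw [Tr.ray_pos ht]; rfl
lemma mem_Yn_cons {n : Nd} {t : PosR} {x : Tr} :
    Tr.cons t x ∈ Yn n ↔ x ∈ Yn (next n t.1) := Iff.rfl

lemma u_dead (i : Bool) (v : Bool → ℝ) (x : Tr) : u i (dead v) x = v i := by
  induction x using Tr.ind with
  | h0 => rfl
  | hc t x ih => rw [u_cons]; exact ih

lemma u_tip (i : Bool) (v : ℝ) (x : Tr) : u i (tip v) x = v := by
  induction x using Tr.ind with
  | h0 => rfl
  | hc t x ih => rw [u_cons]; exact u_dead i _ x

/-- The function is affine on a piece of the initial ray, without branching. -/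
structure Seg (n : Nd) (i : Bool) (α β v k : ℝ) : Prop where
  h0 : 0 ≤ α
  hlt : α < β
  eq : ∀ t ∈ Icc α β, u i n (Tr.ray t) = v + k * (t - α)
  dd : ∀ t ∈ Ioo α β, ∃ w, next n t = dead w

def SideOK (n : Nd) (i : Bool) (s t b : ℝ) : Prop :=
  (∃ w, next n b = dead w) ∧ |u i n (Tr.ray b) - u i n (Tr.ray t)| ≤ s * |b - t|

lemma Seg.est {n : Nd} {i : Bool} {α β v k : ℝ} (h : Seg n i α β v k) {s t b : ℝ} (hk : |k| ≤ s)
    (ht : t ∈ Icc α β) (hb : b ∈ Icc α β) :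
    |u i n (Tr.ray b) - u i n (Tr.ray t)| ≤ s * |b - t| := by
  rw [h.eq t ht, h.eq b hb, show v + k * (b - α) - (v + k * (t - α)) = k * (b - t) by ring, abs_mul]
  exact mul_le_mul_of_nonneg_right hk (abs_nonneg _)

lemma Seg.right {n : Nd} {i : Bool} {α β v k : ℝ} (h : Seg n i α β v k) {s t : ℝ} (hk : |k| ≤ s)
    (ht : t ∈ Ico α β) : ∀ᶠ b in 𝓝[>] t, SideOK n i s t b := by
  filter_upwards [Ioo_mem_nhdsGT ht.2] with b hb
  have h1 : α < b := ht.1.trans_lt hb.1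
  exact ⟨h.dd b ⟨h1, hb.2⟩, h.est hk ⟨ht.1, ht.2.le⟩ ⟨h1.le, hb.2.le⟩⟩

lemma Seg.left {n : Nd} {i : Bool} {α β v k : ℝ} (h : Seg n i α β v k) {s t : ℝ} (hk : |k| ≤ s)
    (ht : t ∈ Ioc α β) : ∀ᶠ b in 𝓝[<] t, SideOK n i s t b := by
  filter_upwards [Ioo_mem_nhdsLT ht.1] with b hb
  have h1 : b < β := hb.2.trans_le ht.2
  exact ⟨h.dd b ⟨hb.1, h1⟩, h.est hk ⟨ht.1.le, ht.2⟩ ⟨hb.1.le, h1.le⟩⟩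

def Loc0 (i : Bool) (n : Nd) (s : ℝ) : Prop :=
  ∀ᶠ m in 𝓝 Tr.rt, |u i n m - u i n Tr.rt| ≤ s * Tr.nm m

lemma loc_ray {n : Nd} {i : Bool} {s t : ℝ} (ht : 0 < t) (hs : 0 ≤ s)
    (hl : ∀ᶠ b in 𝓝[<] t, SideOK n i s t b) (hr : ∀ᶠ b in 𝓝[>] t, SideOK n i s t b)
    (h2 : Loc0 i (next n t) s) :
    ∀ᶠ y in 𝓝 (Tr.ray t), |u i n y - u i n (Tr.ray t)| ≤ s * dist y (Tr.ray t) := by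
  have h1 : ∀ᶠ b in 𝓝[≠] t, SideOK n i s t b := by
    rw [← nhdsLT_sup_nhdsGT]; exact eventually_sup.2 ⟨hl, hr⟩
  rw [eventually_nhdsWithin_iff, Metric.eventually_nhds_iff] at h1
  obtain ⟨δ, hδ, h1⟩ := h1
  obtain ⟨ε, hε, h2⟩ := Metric.eventually_nhds_iff.1 h2
  refine Metric.eventually_nhds_iff.2 ⟨min t (min δ ε), by positivity, fun {y} hy => ?_⟩
  obtain ⟨hy1, hy2, hy3⟩ : _ ∧ _ ∧ _ := by simpa [lt_min_iff] using hy
  induction y using Tr.ind with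
  | h0 =>
    rw [dist_comm, Tr.dist_rt, Tr.ray_pos ht, Tr.nm_cons, Tr.nm_rt] at hy1
    simp at hy1
  | hc b m =>
    rw [Tr.ray_pos ht] at hy1 hy2 hy3 ⊢
    by_cases hb : b.1 = t
    · have hb' : b = ⟨t, ht⟩ := Subtype.ext hb
      subst hb'
      rw [Tr.dist_cons] at hy3 ⊢
      have := h2 hy3
      rw [Tr.dist_rt]
      exact this
    · rw [Tr.dist_cons_ne hb, Tr.nm_rt] at hy2 ⊢
      have hm := Tr.nm_nonneg m
      obtain ⟨⟨w, hw⟩, h3⟩ := h1 (y := b.1) (by rw [Real.dist_eq]; simp at hy2; linarith) hb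
      rw [Tr.ray_pos b.2, Tr.ray_pos ht, u_cons, hw, u_dead] at h3
      rw [u_cons, hw, u_dead]
      refine h3.trans (mul_le_mul_of_nonneg_left ?_ hs)
      simp; exact hm

lemma loc0_dead (i : Bool) (v : Bool → ℝ) {s : ℝ} (hs : 0 ≤ s) : Loc0 i (dead v) s :=
  Eventually.of_forall fun m => by
    rw [u_dead, u_dead, sub_self, abs_zero]; exact mul_nonneg hs (Tr.nm_nonneg m)

lemma loc0_tip (i : Bool) (v : ℝ) {s : ℝ} (hs : 0 ≤ s) : Loc0 i (tip v) s :=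
  Eventually.of_forall fun m => by
    rw [u_tip, u_tip, sub_self, abs_zero]; exact mul_nonneg hs (Tr.nm_nonneg m)

lemma Seg.loc0 {n : Nd} {i : Bool} {β v k s : ℝ} (h : Seg n i 0 β v k) (hk : |k| ≤ s) :
    Loc0 i n s := by
  have hs : 0 ≤ s := (abs_nonneg k).trans hk
  refine Metric.eventually_nhds_iff.2 ⟨β, h.hlt, fun {y} hy => ?_⟩
  induction y using Tr.ind with
  | h0 => simp [Tr.nm_rt]
  | hc b m =>
    rw [Tr.dist_rt, Tr.nm_cons] at hy
    have hm := Tr.nm_nonneg m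
    have hb := b.2
    obtain ⟨w, hw⟩ := h.dd b.1 ⟨hb, by linarith⟩
    have h3 := h.est hk (t := 0) (b := b.1) ⟨le_rfl, h.hlt.le⟩ ⟨hb.le, by linarith⟩
    rw [Tr.ray_zero, Tr.ray_pos hb, u_cons, hw, u_dead, sub_zero, abs_of_pos hb] at h3
    rw [u_cons, hw, u_dead, Tr.nm_cons]
    exact h3.trans (mul_le_mul_of_nonneg_left (by linarith) hs)

lemma reach_ray {f : Tr → ℝ} {α β v k s t t' : ℝ} (h0 : 0 ≤ α)
    (hf : ∀ t ∈ Icc α β, f (Tr.ray t) = v + k * (t - α)) (ht : t ∈ Icc α β) (ht' : t' ∈ Icc α β)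
    (hk : s * |t' - t| ≤ k * (t' - t)) : Reach_s2 f s (Tr.ray t) (Tr.ray t') := by
  have hsub : uIcc t t' ⊆ Icc α β := uIcc_subset_Icc ht ht'
  have hcont : ContinuousOn Tr.ray (Icc α β) := by
    refine (LipschitzOnWith.of_dist_le_mul (K := 1) fun x hx y hy => ?_).continuousOn
    rw [Tr.dist_ray (h0.trans hx.1) (h0.trans hy.1), Real.dist_eq]; simp
  refine ⟨Tr.ray '' uIcc t t', isPreconnected_uIcc.image _ (hcont.mono hsub),
    mem_image_of_mem _ left_mem_uIcc, mem_image_of_mem _ right_mem_uIcc, ?_⟩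
  rintro _ ⟨p, hp, rfl⟩
  have hp' := hsub hp
  rw [hf t ht, hf p hp', Tr.dist_ray (h0.trans ht.1) (h0.trans hp'.1)]
  suffices s * |t - p| ≤ k * (p - t) by linarith
  rcases lt_trichotomy t t' with hlt | heq | hlt
  · rw [uIcc_of_le hlt.le] at hp
    rw [abs_of_pos (by linarith)] at hk
    rw [abs_sub_comm, abs_of_nonneg (by linarith [hp.1])]
    have := le_of_mul_le_mul_right hk (sub_pos.2 hlt)
    exact mul_le_mul_of_nonneg_right this (by linarith [hp.1])
  · subst heq
    simp at hp
    subst hp; simp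
  · rw [uIcc_of_ge hlt.le] at hp
    rw [abs_of_neg (by linarith)] at hk
    rw [abs_of_nonneg (by linarith [hp.2])]
    have : s ≤ - k := le_of_mul_le_mul_right (by linarith) (sub_pos.2 hlt)
    have := mul_le_mul_of_nonneg_right this (show 0 ≤ t - p by linarith [hp.2])
    linarith

lemma Seg.reach_up {n : Nd} {i : Bool} {α β v k s t t' : ℝ} (h : Seg n i α β v k)
    (ht : t ∈ Icc α β) (ht' : t' ∈ Icc α β) (hk : s * |t' - t| ≤ k * (t' - t)) :
    Reach_s2 (u i n) s (Tr.ray t) (Tr.ray t') := reach_ray h.h0 h.eq ht ht' hk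

lemma Seg.reach_down {n : Nd} {i : Bool} {α β v k s t t' : ℝ} (h : Seg n i α β v k)
    (ht : t ∈ Icc α β) (ht' : t' ∈ Icc α β) (hk : s * |t' - t| ≤ - k * (t' - t)) :
    Reach_s2 (fun x => - u i n x) s (Tr.ray t) (Tr.ray t') :=
  reach_ray (v := -v) h.h0 (fun t ht => by rw [h.eq t ht]; ring) ht ht' hk

lemma reach_cons {f g : Tr → ℝ} {t : PosR} (hfg : ∀ x, g (Tr.cons t x) = f x) {s : ℝ} {x y : Tr}
    (h : Reach_s2 f s x y) : Reach_s2 g s (Tr.cons t x) (Tr.cons t y) := by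
  obtain ⟨C, h1, h2, h3, h4⟩ := h
  refine ⟨Tr.cons t '' C, h1.image _ (Tr.isometry_cons t).continuous.continuousOn,
    mem_image_of_mem _ h2, mem_image_of_mem _ h3, ?_⟩
  rintro _ ⟨p, hp, rfl⟩
  rw [hfg, hfg, Tr.dist_cons]
  exact h4 p hp


/-! ### The pieces of a ray -/


lemma next_ell {st : St} (h : st.c ≤ st.s) : next (up st) st.ell = up (St.yst h) := by
  simp [next, h]

lemma next_ell1 {st : St} (h : st.c ≤ st.s) : next (up st) (st.ell + 1) = up (St.zst h) := by
  simp [next, h]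

lemma next_tip {st : St} (h : st.c ≤ st.s) : next (up st) (st.ell + 1 + st.len) = tip 0 := by
  have := st.len_pos
  have h1 : ¬ (st.ell + 1 + st.len < st.ell) := by linarith
  have h2 : ¬ (st.ell + 1 + st.len = st.ell) := by intro h; linarith
  have h3 : ¬ (st.ell + 1 + st.len < st.ell + 1) := by linarith
  have h4 : ¬ (st.ell + 1 + st.len = st.ell + 1) := by intro h; linarith
  simp only [next, dif_pos h, if_neg h1, if_neg h2, if_neg h3, if_neg h4, lt_irrefl, if_true, if_false]

lemma next_g1 {st : St} (h : st.c ≤ st.s) {t : ℝ} (ht : t < st.ell) :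
    next (up st) t = dead (pr (st.a + st.c * t) (st.b + st.s * t)) := by
  simp only [next, dif_pos h, if_pos ht]

lemma next_g2 {st : St} (h : st.c ≤ st.s) {t : ℝ} (ht : st.ell < t) (ht' : t < st.ell + 1) :
    next (up st) t = dead (pr (st.ay - st.cp * (t - st.ell)) st.bY) := by
  simp only [next, dif_pos h, if_neg ht.not_gt, if_neg ht.ne', if_pos ht']

lemma next_g3 {st : St} (h : st.c ≤ st.s) {t : ℝ} (ht : st.ell + 1 < t) (ht' : t < st.ell + 1 + st.len) :
    next (up st) t = dead (pr (st.az - st.cp * (t - (st.ell + 1)))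
      (st.bY - st.sz * (t - (st.ell + 1)))) := by
  have h1 : st.ell < t := by linarith
  simp only [next, dif_pos h, if_neg h1.not_gt, if_neg h1.ne', if_neg ht.not_gt, if_neg ht.ne',
    if_pos ht']

lemma next_g4 {st : St} (h : st.c ≤ st.s) {t : ℝ} (ht : st.ell + 1 + st.len < t) :
    next (up st) t = dead (fun _ => 0) := by
  have := st.len_pos
  have h1 : st.ell < t := by linarith
  have h2 : st.ell + 1 < t := by linarith
  simp only [next, dif_pos h, if_neg h1.not_gt, if_neg h1.ne', if_neg h2.not_gt, if_neg h2.ne',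
    if_neg ht.not_gt, if_neg ht.ne']

lemma seg1 {st : St} (h : st.c ≤ st.s) (i : Bool)
    : Seg (up st) i 0 st.ell (pr st.a st.b i) (sl i st) where
  h0 := le_rfl
  hlt := st.ell_pos
  eq := by
    rintro t ⟨h1, h2⟩
    rcases h1.eq_or_lt with rfl | h1
    · rw [Tr.ray_zero, u_rt]; simp [val]
    rw [u_ray h1]
    rcases h2.eq_or_lt with rfl | h2
    · rw [next_ell h]; cases i <;> simp [val, St.yst, pr, sl, St.ay, St.bY]
    · rw [next_g1 h h2]; cases i <;> simp [val, pr, sl]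
  dd := fun t ht => ⟨_, next_g1 h ht.2⟩

lemma seg2 {st : St} (h : st.c ≤ st.s) (i : Bool)
    : Seg (up st) i st.ell (st.ell + 1) (pr st.ay st.bY i) (-(pr st.cp 0 i)) where
  h0 := st.ell_pos.le
  hlt := by linarith
  eq := by
    rintro t ⟨h1, h2⟩
    rw [u_ray (st.ell_pos.trans_le h1)]
    rcases h1.eq_or_lt with rfl | h1
    · rw [next_ell h]; cases i <;> simp [val, St.yst, pr]
    rcases h2.eq_or_lt with rfl | h2
    · rw [next_ell1 h]; cases i <;> simp [val, St.zst, pr, St.az]; ring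
    · rw [next_g2 h h1 h2]; cases i <;> simp [val, pr]; ring
  dd := fun t ht => ⟨_, next_g2 h ht.1 ht.2⟩

lemma seg3 {st : St} (h : st.c ≤ st.s) (i : Bool)
    : Seg (up st) i (st.ell + 1) (st.ell + 1 + st.len) (pr st.az st.bY i)
    (-(pr st.cp st.sz i)) where
  h0 := by linarith [st.ell_pos]
  hlt := by linarith [st.len_pos]
  eq := by
    rintro t ⟨h1, h2⟩
    rw [u_ray (by linarith [st.ell_pos])]
    rcases h1.eq_or_lt with rfl | h1
    · rw [next_ell1 h]; cases i <;> simp [val, St.zst, pr]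
    rcases h2.eq_or_lt with rfl | h2
    · have e1 := st.cp_pos
      have e2 := st.az_pos
      rw [next_tip h]; cases i <;> simp [val, pr, St.sz, St.len] <;> field_simp <;> ring
    · rw [next_g3 h h1 h2]; cases i <;> simp [val, pr] <;> ring
  dd := fun t ht => ⟨_, next_g3 h ht.1 ht.2⟩

lemma seg4 {st : St} (h : st.c ≤ st.s) (i : Bool)
    {R : ℝ} (hR : st.ell + 1 + st.len < R) :
    Seg (up st) i (st.ell + 1 + st.len) R 0 0 where
  h0 := by linarith [st.ell_pos, st.len_pos]
  hlt := hR
  eq := by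
    rintro t ⟨h1, h2⟩
    rw [u_ray (by linarith [st.ell_pos, st.len_pos])]
    rcases h1.eq_or_lt with rfl | h1
    · rw [next_tip h]; simp [val]
    · rw [next_g4 h h1]; simp [val]
  dd := fun t ht => ⟨_, next_g4 h ht.1⟩



lemma next_t1 {st : St} (h : ¬ st.c ≤ st.s) {t : ℝ} (ht : t < st.top) :
    next (up st) t = dead (pr (st.a + st.c * t) (st.b + st.s * t)) := by
  simp only [next, dif_neg h, if_pos ht]

lemma next_t2 {st : St} (h : ¬ st.c ≤ st.s) : next (up st) st.top = tip (st.a + st.c * st.top) := by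
  simp [next, dif_neg h]

lemma next_t3 {st : St} (h : ¬ st.c ≤ st.s) {t : ℝ} (ht : st.top < t) :
    next (up st) t = dead (fun _ => st.a + st.c * st.top) := by
  simp only [next, dif_neg h, if_neg ht.not_gt, if_neg ht.ne']

lemma segt1 {st : St} (h : ¬ st.c ≤ st.s) (i : Bool)
    : Seg (up st) i 0 st.top (pr st.a st.b i) (sl i st) where
  h0 := le_rfl
  hlt := St.top_pos h
  eq := by
    rintro t ⟨h1, h2⟩
    rcases h1.eq_or_lt with rfl | h1
    · rw [Tr.ray_zero, u_rt]; simp [val]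
    rw [u_ray h1]
    rcases h2.eq_or_lt with rfl | h2
    · have := St.top_eq h
      rw [next_t2 h]; cases i <;> simp [val, pr, sl]; linarith
    · rw [next_t1 h h2]; cases i <;> simp [val, pr, sl]
  dd := fun t ht => ⟨_, next_t1 h ht.2⟩

lemma segt2 {st : St} (h : ¬ st.c ≤ st.s) (i : Bool)
    {R : ℝ} (hR : st.top < R) :
    Seg (up st) i st.top R (st.a + st.c * st.top) 0 where
  h0 := (St.top_pos h).le
  hlt := hR
  eq := by
    rintro t ⟨h1, h2⟩
    rw [u_ray ((St.top_pos h).trans_le h1)]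
    rcases h1.eq_or_lt with rfl | h1
    · rw [next_t2 h]; simp [val]
    · rw [next_t3 h h1]; simp [val]
  dd := fun t ht => ⟨_, next_t3 h ht.1⟩


lemma loc0_up {i : Bool} {st : St} {s : ℝ} (hs : sl i st ≤ s) : Loc0 i (up st) s := by
  have h1 : |sl i st| ≤ s := by rwa [abs_of_pos (sl_pos i st)]
  by_cases h : st.c ≤ st.s
  · exact (seg1 h i).loc0 h1
  · exact (segt1 h i).loc0 h1

lemma mem_Yn_ray {n : Nd} {t : ℝ} (ht : 0 < t) {v : ℝ} (h : next n t = tip v) : Tr.ray t ∈ Yn n := by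
  rw [Tr.ray_pos ht]; exact ⟨v, h⟩

/-- Going up from a point of the ray at which a live turn is available. -/
lemma reach_turn {i : Bool} {n n' : Nd} {t s : ℝ} (ht : 0 < t) (hn : next n t = n')
    (hU : ∃ y ∈ Yn n', Reach_s2 (u i n') s Tr.rt y) :
    ∃ y ∈ Yn n, Reach_s2 (u i n) s (Tr.ray t) y := by
  obtain ⟨y, hy, hr⟩ := hU
  subst hn
  refine ⟨Tr.cons ⟨t, ht⟩ y, hy, ?_⟩
  rw [Tr.ray_pos ht]
  exact reach_cons (fun x => u_cons _ _ _ _) hr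

lemma up_reach_aux (i : Bool) {g : ℝ} (hg : 1 < g) (N : ℕ) : ∀ st : St,
    g ≤ (1 + 8 * st.c / st.s ^ 2) / 2 → st.s < st.c * g ^ N →
    ∃ y ∈ Yn (up st), Reach_s2 (u i (up st)) (sl i st) Tr.rt y := by
  have htop : ∀ st : St, ¬ st.c ≤ st.s →
      ∃ y ∈ Yn (up st), Reach_s2 (u i (up st)) (sl i st) Tr.rt y := by
    intro st h
    have h1 := St.top_pos h
    refine ⟨Tr.ray st.top, mem_Yn_ray h1 (next_t2 h), ?_⟩
    rw [← Tr.ray_zero]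
    exact (segt1 h i).reach_up ⟨le_rfl, h1.le⟩ ⟨h1.le, le_rfl⟩ (by rw [sub_zero, abs_of_pos h1])
  induction N with
  | zero =>
    intro st _ h
    exact htop st (by simpa using h)
  | succ N ih =>
    intro st h1 h2
    by_cases h : st.c ≤ st.s
    · have hl := st.ell_pos
      have e1 := st.hc
      have e2 := st.hs
      have hcp : st.c * g ≤ st.cp := by
        have := mul_le_mul_of_nonneg_left h1 st.hc.le
        have e : st.c * ((1 + 8 * st.c / st.s ^ 2) / 2) = st.cp := by unfold St.cp; ring
        linarith
      have hU := ih (St.yst h) (by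
        refine h1.trans ?_
        have : 8 * st.c / st.s ^ 2 ≤ 8 * st.cp / st.s ^ 2 := by
          have := st.cp_gt.le
          gcongr
        change _ ≤ (1 + 8 * st.cp / st.s ^ 2) / 2
        linarith) (by
        change st.s < st.cp * g ^ N
        refine h2.trans_le ?_
        rw [pow_succ, mul_comm (g ^ N), ← mul_assoc]
        exact mul_le_mul_of_nonneg_right hcp (by positivity))
      obtain ⟨y, hy, hr⟩ := reach_turn hl (next_ell h) hU
      refine ⟨y, hy, ?_⟩
      have hle : sl i st ≤ sl i (St.yst h) := by
        have := st.cp_gt.le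
        cases i <;> simp [sl, pr, St.yst, this]
      refine Reach_s2.trans (sl_pos i st).le ?_ (hr.mono hle)
      rw [← Tr.ray_zero]
      exact (seg1 h i).reach_up ⟨le_rfl, hl.le⟩ ⟨hl.le, le_rfl⟩ (by rw [sub_zero, abs_of_pos hl])
    · exact htop st h

lemma up_reach (i : Bool) (st : St) : ∃ y ∈ Yn (up st), Reach_s2 (u i (up st)) (sl i st) Tr.rt y := by
  have e1 := st.hc
  have e2 := st.hs
  have hg : 1 < (1 + 8 * st.c / st.s ^ 2) / 2 := by
    have : 1 < 8 * st.c / st.s ^ 2 := by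
      rw [lt_div_iff₀ (by positivity), one_mul]; exact st.hM
    linarith
  obtain ⟨N, hN⟩ := pow_unbounded_of_one_lt (st.s / st.c) hg
  refine up_reach_aux i hg N st le_rfl ?_
  rwa [div_lt_iff₀ e1, mul_comm] at hN

/-! ### Every point is good -/

def DownX (i : Bool) (n : Nd) (s : ℝ) (x : Tr) : Prop :=
  ∃ y, Reach_s2 (fun z => - u i n z) s x y ∧ (y ∈ Yn n ∨ (y = Tr.rt ∧ s ≤ slN i n))

def GoodX (i : Bool) (n : Nd) (x : Tr) : Prop :=
  ∃ s, 0 ≤ s ∧ s ≤ 8 ∧ (∀ᶠ y in 𝓝 x, |u i n y - u i n x| ≤ s * dist y x) ∧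
    (x ∈ Yn n ∨ s = 0 ∨ ((∃ y ∈ Yn n, Reach_s2 (u i n) s x y) ∧ DownX i n s x))

lemma DownX.of_reach {i : Bool} {n : Nd} {s : ℝ} (hs : 0 ≤ s) {x y : Tr}
    (h : Reach_s2 (fun z => - u i n z) s x y) (h' : DownX i n s y) : DownX i n s x := by
  obtain ⟨z, h1, h2⟩ := h'
  exact ⟨z, h.trans hs h1, h2⟩


lemma down3 {st : St} (h : st.c ≤ st.s) {i : Bool}
    {s t : ℝ} (hs : s ≤ pr st.cp st.sz i)
    (ht : t ∈ Icc (st.ell + 1) (st.ell + 1 + st.len)) : DownX i (up st) s (Tr.ray t) := by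
  have h1 := st.ell_pos
  have h2 := st.len_pos
  refine ⟨_, (seg3 h i).reach_down ht ⟨by linarith, le_rfl⟩ ?_,
    Or.inl (mem_Yn_ray (by linarith) (next_tip h))⟩
  have := sub_nonneg.2 ht.2
  rw [abs_of_nonneg this, neg_neg]
  exact mul_le_mul_of_nonneg_right hs this

lemma down2 {st : St} (h : st.c ≤ st.s)
    {s t : ℝ} (hs0 : 0 ≤ s) (hs : s ≤ st.cp)
    (ht : t ∈ Icc (st.ell) (st.ell + 1)) : DownX false (up st) s (Tr.ray t) := by
  have h1 := st.ell_pos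
  have h2 := st.len_pos
  refine DownX.of_reach hs0 ((seg2 h false).reach_down ht (t' := st.ell + 1) ⟨by linarith, le_rfl⟩ ?_)
    (down3 h (by simpa [pr] using hs) ⟨le_rfl, by linarith⟩)
  have := sub_nonneg.2 ht.2
  rw [abs_of_nonneg this, neg_neg]
  exact mul_le_mul_of_nonneg_right (by simpa [pr] using hs) this

lemma down1 {st : St} (h : st.c ≤ st.s) {i : Bool}
    {s t : ℝ} (hs : s ≤ sl i st)
    (ht : t ∈ Icc 0 (st.ell)) : DownX i (up st) s (Tr.ray t) := by
  have h1 := st.ell_pos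
  refine ⟨_, (seg1 h i).reach_down ht ⟨le_rfl, h1.le⟩ ?_, Or.inr ⟨Tr.ray_zero, hs⟩⟩
  have := ht.1
  rw [abs_sub_comm, sub_zero, abs_of_nonneg this]
  have := mul_le_mul_of_nonneg_right hs this
  linarith

lemma ext_ell {st : St} (h : st.c ≤ st.s) {i : Bool}
    {s : ℝ} (hs0 : 0 ≤ s) (hs : s ≤ sl i (St.yst h)) :
    DownX i (up st) s (Tr.ray st.ell) := by
  have h1 := st.ell_pos
  cases i
  · exact down2 h hs0 (by simpa [sl, pr, St.yst] using hs) ⟨le_rfl, by linarith⟩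
  · exact down1 h (by simpa [sl, pr, St.yst] using hs) ⟨h1.le, le_rfl⟩

lemma sl_zst {st : St} (h : st.c ≤ st.s) {i : Bool}
    : sl i (St.zst h) = pr st.cp st.sz i := by
  cases i <;> simp [sl, pr, St.zst]

lemma ext_ell1 {st : St} (h : st.c ≤ st.s) {i : Bool}
    {s : ℝ} (hs : s ≤ sl i (St.zst h)) :
    DownX i (up st) s (Tr.ray (st.ell + 1)) := by
  have h1 := st.len_pos
  rw [sl_zst h] at hs
  exact down3 h hs ⟨le_rfl, by linarith⟩

lemma good_gen {st : St} (h : st.c ≤ st.s) {i : Bool}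
    {t : ℝ} (ht : 0 < t) : GoodX i (up st) (Tr.ray t) := by
  have h1 := st.ell_pos
  have h2 := st.len_pos
  have hcp := st.cp_pos
  have hy0 := sl_pos i (St.yst h)
  have hz0 := sl_pos i (St.zst h)
  have hs0 := sl_pos i st
  have hyz : sl i st ≤ sl i (St.yst h) := by
    have := st.cp_gt.le
    cases i <;> simp [sl, pr, St.yst, this]
  have hUy := reach_turn h1 (next_ell h) (up_reach i (St.yst h))
  have hUz := reach_turn (by linarith) (next_ell1 h) (up_reach i (St.zst h))
  have hq : |-(pr st.cp st.sz i)| ≤ sl i (St.zst h) := by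
    rw [abs_neg, ← sl_zst h, abs_of_pos hz0]
  have hm0 : 0 ≤ pr st.cp 0 i := by cases i <;> simp [pr, hcp.le]
  have hmz : pr st.cp 0 i ≤ sl i (St.zst h) := by
    rw [sl_zst h]; cases i <;> simp [pr, (St.sz_pos h).le]
  have hmy : pr st.cp 0 i ≤ sl i (St.yst h) := by
    cases i <;> simp [pr, sl, St.yst, st.hs.le]
  rcases lt_trichotomy t st.ell with hc | rfl | hc
  · refine ⟨sl i st, hs0.le, sl_le _ _, ?_, Or.inr (Or.inr ⟨?_, down1 h le_rfl ⟨ht.le, hc.le⟩⟩)⟩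
    · refine loc_ray ht hs0.le ((seg1 h i).left (abs_of_pos hs0).le ⟨ht, hc.le⟩)
        ((seg1 h i).right (abs_of_pos hs0).le ⟨ht.le, hc⟩) ?_
      rw [next_g1 h hc]; exact loc0_dead _ _ hs0.le
    · obtain ⟨y, hy, hr⟩ := hUy
      refine ⟨y, hy, Reach_s2.trans hs0.le ((seg1 h i).reach_up ⟨ht.le, hc.le⟩ ⟨h1.le, le_rfl⟩ ?_)
        (hr.mono hyz)⟩
      rw [abs_of_pos (sub_pos.2 hc)]
  · refine ⟨sl i (St.yst h), hy0.le, sl_le _ _, ?_, Or.inr (Or.inr ⟨hUy, ext_ell h hy0.le le_rfl⟩)⟩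
    refine loc_ray ht hy0.le ((seg1 h i).left ((abs_of_pos hs0).le.trans hyz) ⟨ht, le_rfl⟩)
        ((seg2 h i).right (by rw [abs_neg, abs_of_nonneg hm0]; exact hmy) ⟨le_rfl, by linarith⟩) ?_
    rw [next_ell h]; exact loc0_up le_rfl
  rcases lt_trichotomy t (st.ell + 1) with hc2 | rfl | hc2
  · refine ⟨pr st.cp 0 i, hm0, hmz.trans (sl_le _ _), ?_, ?_⟩
    · have hk : |-(pr st.cp 0 i)| ≤ pr st.cp 0 i := by rw [abs_neg, abs_of_nonneg hm0]
      refine loc_ray ht hm0 ((seg2 h i).left hk ⟨hc, hc2.le⟩)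
        ((seg2 h i).right hk ⟨hc.le, hc2⟩) ?_
      rw [next_g2 h hc hc2]; exact loc0_dead _ _ hm0
    · right
      cases i
      · right
        refine ⟨?_, down2 h hm0 (by simp [pr]) ⟨hc.le, hc2.le⟩⟩
        obtain ⟨y, hy, hr⟩ := hUy
        refine ⟨y, hy, Reach_s2.trans hm0 ((seg2 h false).reach_up ⟨hc.le, hc2.le⟩
          ⟨le_rfl, by linarith⟩ ?_) (hr.mono hmy)⟩
        rw [abs_of_neg (sub_neg.2 hc)]
        exact le_of_eq (by ring)
      · left; simp [pr]
  · refine ⟨sl i (St.zst h), hz0.le, sl_le _ _, ?_, Or.inr (Or.inr ⟨hUz, ext_ell1 h le_rfl⟩)⟩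
    refine loc_ray ht hz0.le ((seg2 h i).left (by rw [abs_neg, abs_of_nonneg hm0]; exact hmz)
        ⟨by linarith, le_rfl⟩)
        ((seg3 h i).right hq ⟨le_rfl, by linarith⟩) ?_
    rw [next_ell1 h]; exact loc0_up le_rfl
  rcases lt_trichotomy t (st.ell + 1 + st.len) with hc3 | rfl | hc3
  · refine ⟨sl i (St.zst h), hz0.le, sl_le _ _, ?_, Or.inr (Or.inr ⟨?_,
      down3 h (sl_zst h).le ⟨hc2.le, hc3.le⟩⟩)⟩
    · refine loc_ray ht hz0.le ((seg3 h i).left hq ⟨hc2, hc3.le⟩)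
        ((seg3 h i).right hq ⟨hc2.le, hc3⟩) ?_
      rw [next_g3 h hc2 hc3]; exact loc0_dead _ _ hz0.le
    · obtain ⟨y, hy, hr⟩ := hUz
      refine ⟨y, hy, Reach_s2.trans hz0.le ((seg3 h i).reach_up ⟨hc2.le, hc3.le⟩
          ⟨le_rfl, by linarith⟩ ?_) hr⟩
      rw [abs_of_neg (sub_neg.2 hc2), sl_zst h]
      exact le_of_eq (by ring)
  · refine ⟨sl i (St.zst h), hz0.le, sl_le _ _, ?_, Or.inl (mem_Yn_ray ht (next_tip h))⟩
    refine loc_ray ht hz0.le ((seg3 h i).left hq ⟨by linarith, le_rfl⟩)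
        ((seg4 h i (lt_add_one _)).right (by rw [abs_zero]; exact hz0.le) ⟨le_rfl, by linarith⟩) ?_
    rw [next_tip h]; exact loc0_tip _ _ hz0.le
  · refine ⟨0, le_rfl, by norm_num, ?_, Or.inr (Or.inl rfl)⟩
    have hS := seg4 h i (R := t + 1) (by linarith)
    refine loc_ray ht le_rfl (hS.left (by simp) ⟨hc3, by linarith⟩)
        (hS.right (by simp) ⟨hc3.le, by linarith⟩) ?_
    rw [next_g4 h hc3]; exact loc0_dead _ _ le_rfl


lemma good_top {st : St} (h : ¬ st.c ≤ st.s) {i : Bool} {t : ℝ} (ht : 0 < t) :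
    GoodX i (up st) (Tr.ray t) := by
  have h1 := St.top_pos h
  have hs0 := sl_pos i st
  have hk := (abs_of_pos hs0).le
  rcases lt_trichotomy t st.top with hc | rfl | hc
  · refine ⟨sl i st, hs0.le, sl_le _ _, ?_, Or.inr (Or.inr ⟨⟨_, mem_Yn_ray h1 (next_t2 h), ?_⟩, ?_⟩)⟩
    · refine loc_ray ht hs0.le ((segt1 h i).left hk ⟨ht, hc.le⟩)
        ((segt1 h i).right hk ⟨ht.le, hc⟩) ?_
      rw [next_t1 h hc]; exact loc0_dead _ _ hs0.le
    · exact (segt1 h i).reach_up ⟨ht.le, hc.le⟩ ⟨h1.le, le_rfl⟩ (by rw [abs_of_pos (sub_pos.2 hc)])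
    · refine ⟨_, (segt1 h i).reach_down ⟨ht.le, hc.le⟩ ⟨le_rfl, h1.le⟩ ?_,
        Or.inr ⟨Tr.ray_zero, le_rfl⟩⟩
      rw [abs_sub_comm, sub_zero, abs_of_pos ht]
      exact le_of_eq (by ring)
  · refine ⟨sl i st, hs0.le, sl_le _ _, ?_, Or.inl (mem_Yn_ray h1 (next_t2 h))⟩
    refine loc_ray ht hs0.le ((segt1 h i).left hk ⟨ht, le_rfl⟩)
        ((segt2 h i (lt_add_one _)).right (by rw [abs_zero]; exact hs0.le) ⟨le_rfl, by linarith⟩) ?_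
    rw [next_t2 h]; exact loc0_tip _ _ hs0.le
  · refine ⟨0, le_rfl, by norm_num, ?_, Or.inr (Or.inl rfl)⟩
    have hS := segt2 h i (R := t + 1) (by linarith)
    refine loc_ray ht le_rfl (hS.left (by simp) ⟨hc, by linarith⟩)
        (hS.right (by simp) ⟨hc.le, by linarith⟩) ?_
    rw [next_t3 h hc]; exact loc0_dead _ _ le_rfl

/-- A live turn allows going down past its base. -/
lemma ext_turn {i : Bool} {n : Nd} {t : ℝ} (ht : 0 < t) {st' : St} (hn : next n t = up st')
    {s : ℝ} (hs0 : 0 ≤ s) (hs : s ≤ sl i st') : DownX i n s (Tr.ray t) := by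
  cases n with
  | dead v => simp [next] at hn
  | tip v => simp [next] at hn
  | up st =>
    by_cases h : st.c ≤ st.s
    · rcases lt_trichotomy t st.ell with hc | rfl | hc
      · rw [next_g1 h hc] at hn; simp at hn
      · rw [next_ell h] at hn
        simp only [up.injEq] at hn
        subst hn
        exact ext_ell h hs0 hs
      rcases lt_trichotomy t (st.ell + 1) with hc2 | rfl | hc2
      · rw [next_g2 h hc hc2] at hn; simp at hn
      · rw [next_ell1 h] at hn
        simp only [up.injEq] at hn
        subst hn
        exact ext_ell1 h hs
      rcases lt_trichotomy t (st.ell + 1 + st.len) with hc3 | rfl | hc3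
      · rw [next_g3 h hc2 hc3] at hn; simp at hn
      · rw [next_tip h] at hn; simp at hn
      · rw [next_g4 h hc3] at hn; simp at hn
    · rcases lt_trichotomy t st.top with hc | rfl | hc
      · rw [next_t1 h hc] at hn; simp at hn
      · rw [next_t2 h] at hn; simp at hn
      · rw [next_t3 h hc] at hn; simp at hn

lemma good_const {i : Bool} {n : Nd} {v : ℝ} (h : ∀ x, u i n x = v) (x : Tr) : GoodX i n x :=
  ⟨0, le_rfl, by norm_num, Eventually.of_forall fun y => by simp [h], Or.inr (Or.inl rfl)⟩

lemma good_cons {i : Bool} {n : Nd} {t : PosR} {x : Tr} (hx : 0 < Tr.nm x)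
    (h : GoodX i (next n t.1) x) : GoodX i n (Tr.cons t x) := by
  obtain ⟨s, h0, h8, hloc, hs⟩ := h
  refine ⟨s, h0, h8, ?_, ?_⟩
  · obtain ⟨ε, hε, h2⟩ := Metric.eventually_nhds_iff.1 hloc
    refine Metric.eventually_nhds_iff.2 ⟨min ε (Tr.nm x), lt_min hε hx, fun {y} hy => ?_⟩
    obtain ⟨hy1, hy2⟩ := lt_min_iff.1 hy
    have ht := t.2
    induction y using Tr.ind with
    | h0 =>
      rw [dist_comm, Tr.dist_rt, Tr.nm_cons] at hy2
      have : (0 : ℝ) < t.1 := ht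
      linarith
    | hc b m =>
      by_cases hb : b.1 = t.1
      · have hb' : b = t := Subtype.ext hb
        subst hb'
        rw [Tr.dist_cons] at hy1 ⊢
        exact h2 hy1
      · rw [Tr.dist_cons_ne hb] at hy2
        have := Tr.nm_nonneg m
        have := abs_nonneg (b.1 - t.1)
        linarith
  · rcases hs with hs | hs | ⟨⟨y, hy, hr⟩, z, hz, hz'⟩
    · exact Or.inl hs
    · exact Or.inr (Or.inl hs)
    by_cases hs0 : s = 0
    · exact Or.inr (Or.inl hs0)
    refine Or.inr (Or.inr ⟨⟨Tr.cons t y, hy, reach_cons (fun x => u_cons _ _ _ _) hr⟩, ?_⟩)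
    have hz2 : Reach_s2 (fun z => - u i n z) s (Tr.cons t x) (Tr.cons t z) :=
      reach_cons (fun x => by rw [u_cons]) hz
    rcases hz' with hz' | ⟨rfl, hsn⟩
    · exact ⟨Tr.cons t z, hz2, Or.inl hz'⟩
    · have hpos : 0 < s := lt_of_le_of_ne h0 (Ne.symm hs0)
      cases hn : next n t.1 with
      | dead v => rw [hn] at hsn; simp [slN] at hsn; linarith
      | tip v => rw [hn] at hsn; simp [slN] at hsn; linarith
      | up st' =>
        rw [hn] at hsn
        have := ext_turn (i := i) t.2 hn h0 hsn
        rw [Tr.ray_pos t.2] at this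
        exact DownX.of_reach h0 hz2 this

lemma good (i : Bool) (x : Tr) : ∀ n, x ≠ Tr.rt → GoodX i n x := by
  induction x using Tr.ind with
  | h0 => intro n h; exact absurd rfl h
  | hc t x ih =>
    intro n _
    by_cases hx : x = Tr.rt
    · subst hx
      cases n with
      | dead v => exact good_const (u_dead i v) _
      | tip v => exact good_const (u_tip i v) _
      | up st =>
        have : Tr.cons t Tr.rt = Tr.ray t.1 := (Tr.ray_pos t.2).symm
        rw [this]
        by_cases h : st.c ≤ st.s
        · exact good_gen h t.2
        · exact good_top h t.2
    · exact good_cons (Tr.nrm_pos hx) (ih _ hx)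

/-! ### The example -/

def st0 : St where
  a := 0
  b := 0
  c := 1
  s := 2
  ha := le_rfl
  hab := le_rfl
  hc := by norm_num
  hs := by norm_num
  hcM := by norm_num
  hsM := by norm_num
  hM := by norm_num
  hne := by norm_num

def Y0 : Set Tr := Yn (up st0) ∪ {Tr.rt}

lemma goodAt (i : Bool) (x : Tr) : GoodAt Y0 8 (u i (up st0)) x := by
  by_cases hx : x = Tr.rt
  · subst hx
    refine ⟨sl i st0, (sl_pos _ _).le, sl_le _ _, ?_, Or.inl (Or.inr rfl)⟩
    have := loc0_up (i := i) (st := st0) le_rfl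
    filter_upwards [this] with y hy
    rw [Tr.dist_rt]; exact hy
  · obtain ⟨s, h0, h8, hloc, hs⟩ := good i x (up st0) hx
    refine ⟨s, h0, h8, hloc, ?_⟩
    rcases hs with hs | hs | ⟨⟨y, hy, hr⟩, z, hz, hz'⟩
    · exact Or.inl (Or.inl hs)
    · exact Or.inr (Or.inl hs)
    · refine Or.inr (Or.inr ⟨⟨y, Or.inl hy, hr⟩, z, ?_, hz⟩)
      rcases hz' with hz' | ⟨hz', _⟩
      · exact Or.inl hz'
      · exact Or.inr hz'

lemma tip_nonneg (x : Tr) : ∀ n, (∀ v, n = tip v → 0 ≤ v) → ∀ v, run n x = tip v → 0 ≤ v := by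
  induction x using Tr.ind with
  | h0 => intro n hn v hv; exact hn v hv
  | hc t x ih =>
    intro n _ v hv
    refine ih (next n t.1) ?_ v hv
    intro w hw
    cases n with
    | dead v => simp [next] at hw
    | tip v => simp [next] at hw
    | up st =>
      simp only [next] at hw
      split_ifs at hw with h
      · simp at hw; exact hw.le
      · have := St.top_pos h
        have := st.ha
        have := st.hc
        simp at hw
        rw [← hw]
        positivity

lemma eqOn (i j : Bool) : EqOn (u i (up st0)) (u j (up st0)) Y0 := by
  rintro x (⟨v, hv⟩ | hx)
  · simp [u, hv, val]
  · rw [mem_singleton_iff.1 hx]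
    cases i <;> cases j <;> simp [u_rt, val, pr, st0]

lemma nonneg (i : Bool) : ∀ x ∈ Y0, 0 ≤ u i (up st0) x := by
  rintro x (⟨v, hv⟩ | hx)
  · have := tip_nonneg x (up st0) (by simp) v hv
    simpa [u, hv, val] using this
  · rw [mem_singleton_iff.1 hx]
    cases i <;> simp [u_rt, val, pr, st0]

lemma u_ne : u false (up st0) ≠ u true (up st0) := by
  intro h
  have h1 : st0.c ≤ st0.s := by norm_num [st0]
  have := congrFun h (Tr.ray st0.ell)
  rw [u_ray st0.ell_pos, u_ray st0.ell_pos, next_ell h1] at this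
  simp [val, pr, St.yst] at this
  exact (St.ay_lt h1).ne this

end Nd

/-- Uniqueness of AM extensions can fail for unbounded nonnegative Lipschitz boundary data:
there is a length space `X`, a nonempty `Y ⊆ X`, and a nonnegative Lipschitz
`F` on `Y` with two distinct AM extensions. -/
theorem stmt2 :
    ∃ (X : Type) (inst : MetricSpace X), IsLengthSpace X ∧
      ∃ (Y : Set X) (F u₁ u₂ : X → ℝ), Y.Nonempty ∧
        (∃ K : NNReal, LipschitzOnWith K F Y) ∧ (∀ y ∈ Y, 0 ≤ F y) ∧
        u₁ ≠ u₂ ∧ IsAMExtension Y F u₁ ∧ IsAMExtension Y F u₂ := by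
  refine ⟨Tr, inferInstance, isLengthSpace_of_geo Tr.geo, Nd.Y0, Nd.u false (Nd.up Nd.st0),
    Nd.u false (Nd.up Nd.st0), Nd.u true (Nd.up Nd.st0), ⟨Tr.rt, Or.inr rfl⟩,
    ⟨8, LipschitzOnWith.of_dist_le_mul fun x _ y _ => ?_⟩, Nd.nonneg false, Nd.u_ne,
    isAM_of_goodAt (by norm_num) Tr.geo (Nd.goodAt false) (Nd.eqOn _ _),
    isAM_of_goodAt (by norm_num) Tr.geo (Nd.goodAt true) (Nd.eqOn _ _)⟩
  rw [Real.dist_eq]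
  exact lip_of_goodAt (by norm_num) Tr.geo (Nd.goodAt false) x y

end
end
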